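/- arXiv:2212.02300 — 2 statements merged into one kernel-verified Lean document; each statement's English description precedes it below -/
import Mathlib

section
/- Let R be an associative ring. If M is an FpProj-periodic right R-module, i.e. there exists a short exact sequence 0 → M → A → M → 0 of right R-modules with A fp-projective, then M is weakly fp-projective. -/
/-!
STATEMENT 0: Let R be an associative ring. If M is an FpProj-periodic right
R-module (there is a short exact sequence 0 → M → A → M → 0 with A
fp-projective), then M is weakly fp-projective.

Right `R`-modules are formalized as modules over the opposite ring `Rᵐᵒᵖ`.
-/

open CategoryTheory Limits

universe u

namespace Stmt0

variable (R : Type u) [Ring R]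

/-- The category of right `R`-modules. -/
abbrev RightMod := ModuleCat.{u} Rᵐᵒᵖ

instance : HasExt.{u + 1} (RightMod R) := by
  letI := HasDerivedCategory.standard (RightMod R)
  exact hasExt_of_hasDerivedCategory _

/-- A right `R`-module `J` is fp-injective if `Ext¹(T, J) = 0` for every
finitely presented right `R`-module `T`. -/
def FpInjective (J : RightMod R) : Prop :=
  ∀ T : RightMod R, Module.FinitePresentation Rᵐᵒᵖ T →
    Subsingleton (Abelian.Ext T J 1)

/-- A right `R`-module `J` is strongly fp-injective if `Extⁿ(T, J) = 0` for
every finitely presented right `R`-module `T` and every `n ≥ 1`. -/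
def StronglyFpInjective (J : RightMod R) : Prop :=
  ∀ T : RightMod R, Module.FinitePresentation Rᵐᵒᵖ T →
    ∀ n : ℕ, 1 ≤ n → Subsingleton (Abelian.Ext T J n)

/-- A right `R`-module `P` is fp-projective if `Ext¹(P, J) = 0` for every
fp-injective right `R`-module `J`. -/
def FpProjective (P : RightMod R) : Prop :=
  ∀ J : RightMod R, FpInjective R J → Subsingleton (Abelian.Ext P J 1)

/-- A right `R`-module `P` is weakly fp-projective if `Ext¹(P, J) = 0` for
every strongly fp-injective right `R`-module `J`. -/
def WeaklyFpProjective (P : RightMod R) : Prop :=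
  ∀ J : RightMod R, StronglyFpInjective R J → Subsingleton (Abelian.Ext P J 1)

end Stmt0

namespace FpPer

theorem lift_kill {R : Type u} [Ring R] {G₀ G₁ G₂ : Type u} [AddCommGroup G₀] [Module R G₀]
    [AddCommGroup G₁] [Module R G₁] [AddCommGroup G₂] [Module R G₂]
    (δ₀ : G₀ →ₗ[R] G₁) (δ₁ : G₁ →ₗ[R] G₂)
    (LP : ∀ (X : Type u) [AddCommGroup X] [Module R X], Module.FinitePresentation R X →
      ∀ g : X →ₗ[R] G₁, (∀ x, δ₁ (g x) = 0) → ∃ h : X →ₗ[R] G₀, ∀ x, δ₀ (h x) = g x)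
    (X : Type u) [AddCommGroup X] [Module R X] (hX : Module.FinitePresentation R X)
    (D : Submodule R X) (hD : D.FG) (g : X →ₗ[R] G₁) (hg : ∀ x, δ₁ (g x) = 0)
    (hgD : ∀ x ∈ D, g x = 0) :
    ∃ h : X →ₗ[R] G₀, (∀ x, δ₀ (h x) = g x) ∧ ∀ x ∈ D, h x = 0 := by
  have hQ : Module.FinitePresentation R (X ⧸ D) :=
    Module.finitePresentation_of_surjective D.mkQ D.mkQ_surjective (by simpa using hD)
  obtain ⟨h, hh⟩ := LP (X ⧸ D) hQ (D.liftQ g hgD) (by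
    intro x
    obtain ⟨x, rfl⟩ := D.mkQ_surjective x
    exact hg x)
  refine ⟨h ∘ₗ D.mkQ, fun x => hh _, fun x hx => ?_⟩
  have : D.mkQ x = 0 := by simpa using hx
  rw [LinearMap.comp_apply, this, map_zero]

theorem stepB {R : Type u} [Ring R] {T G : ℕ → Type u}
    [∀ n, AddCommGroup (T n)] [∀ n, Module R (T n)]
    [∀ n, AddCommGroup (G n)] [∀ n, Module R (G n)]
    (hT : ∀ n, Module.FinitePresentation R (T n))
    (d : ∀ n, T n →ₗ[R] T (n+1)) (hd : ∀ n x, d (n+1) (d n x) = 0)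
    (δ : ∀ n, G n →ₗ[R] G (n+1)) (hδ : ∀ n x, δ (n+1) (δ n x) = 0)
    (LP : ∀ n (X : Type u) [AddCommGroup X] [Module R X], Module.FinitePresentation R X →
      ∀ g : X →ₗ[R] G (n+1), (∀ x, δ (n+1) (g x) = 0) →
        ∃ h : X →ₗ[R] G n, ∀ x, δ n (h x) = g x)
    (e : ∀ n, T n →ₗ[R] G (n+1)) (he : ∀ n x, δ (n+1) (e n x) = e (n+1) (d n x)) :
    ∃ k : ∀ n, T n →ₗ[R] G n, ∀ n x, e n x = δ n (k n x) + k (n+1) (d n x) := by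
  -- the images in each degree
  let D : ∀ n, Submodule R (T n) := fun n => Nat.casesOn n ⊥ (fun m => LinearMap.range (d m))
  have hDfg : ∀ n, (D n).FG := by
    rintro (_ | n)
    · exact Submodule.fg_bot
    · have := hT n
      exact Module.Finite.iff_fg.1 (Module.Finite.range (d n))
  have hDd : ∀ n, ∀ x ∈ D n, d n x = 0 := by
    rintro (_ | n) x hx
    · rw [(Submodule.mem_bot R).1 hx, map_zero]
    · obtain ⟨y, rfl⟩ := hx
      exact hd n y
  have step : ∀ n (h : T n →ₗ[R] G n), (∀ x ∈ D n, e n x - δ n (h x) = 0) →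
      ∃ (s : T n →ₗ[R] G n) (v : T (n+1) →ₗ[R] G (n+1)), (∀ x ∈ D n, s x = 0) ∧
        (∀ x, e n x = δ n (h x + s x) + v (d n x)) ∧
        (∀ x ∈ D (n+1), e (n+1) x - δ (n+1) (v x) = 0) := by
    intro n h hh
    obtain ⟨t, ht, htD⟩ := lift_kill (δ (n+2)) (δ (n+3)) (LP (n+2)) (T (n+1)) (hT _) (D (n+1))
      (hDfg _) (δ (n+2) ∘ₗ e (n+1)) (fun x => hδ _ _) (by
        rintro x ⟨y, rfl⟩
        simp [← he, hδ])
    obtain ⟨v, hv⟩ := LP (n+1) (T (n+1)) (hT _) (e (n+1) - t) (by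
      intro x
      simp [ht])
    obtain ⟨s, hs, hsD⟩ := lift_kill (δ n) (δ (n+1)) (LP n) (T n) (hT _) (D n) (hDfg n)
      (e n - δ n ∘ₗ h - v ∘ₗ d n) (by
        intro x
        have := htD (d n x) ⟨x, rfl⟩
        simp [hδ, hv, he, this]) (by
        intro x hx
        simp [hDd n x hx, hh x hx])
    refine ⟨s, v, hsD, ?_, ?_⟩
    · intro x
      rw [map_add, hs]
      simp only [LinearMap.sub_apply, LinearMap.comp_apply]
      abel
    · intro x hx
      rw [hv, LinearMap.sub_apply, htD x hx, sub_zero, sub_self]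
  choose s v hs hv hvD using step
  let seq : ∀ n, {h : T n →ₗ[R] G n // ∀ x ∈ D n, e n x - δ n (h x) = 0} := fun n =>
    Nat.rec ⟨0, fun x hx => by rw [(Submodule.mem_bot R).1 hx]; simp⟩
      (fun n h => ⟨v n h.1 h.2, hvD n h.1 h.2⟩) n
  refine ⟨fun n => (seq n).1 + s n (seq n).1 (seq n).2, fun n x => ?_⟩
  have h1 : (seq (n+1)).1 = v n (seq n).1 (seq n).2 := rfl
  have h2 := hs (n+1) (seq (n+1)).1 (seq (n+1)).2 (d n x) ⟨x, rfl⟩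
  have h3 := hv n (seq n).1 (seq n).2 x
  rw [LinearMap.add_apply, LinearMap.add_apply, h2, h1, add_zero]
  exact h3

end FpPer

namespace FpPer

theorem extendStep {R : Type u} [Ring R] {P : Type u} [AddCommGroup P] [Module R P] {G : ℕ → Type u}
    [∀ n, AddCommGroup (G n)] [∀ n, Module R (G n)]
    (d : P →ₗ[R] P) (hd : ∀ x, d (d x) = 0)
    (δ : ∀ n, G n →ₗ[R] G (n+1)) (hδ : ∀ n x, δ (n+1) (δ n x) = 0)
    (LP : ∀ n (X : Type u) [AddCommGroup X] [Module R X], Module.FinitePresentation R X →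
      ∀ g : X →ₗ[R] G (n+1), (∀ x, δ (n+1) (g x) = 0) →
        ∃ h : X →ₗ[R] G n, ∀ x, δ n (h x) = g x)
    (EP : ∀ n (B B' : Submodule R P) (hle : B ≤ B'),
      Module.FinitePresentation R (B' ⧸ B.submoduleOf B') → ∀ g : B →ₗ[R] G n,
        ∃ g' : B' →ₗ[R] G n, ∀ x (hx : x ∈ B), g' ⟨x, hle hx⟩ = g ⟨x, hx⟩)
    (f : ∀ n, P →ₗ[R] G (n+1)) (hf : ∀ n x, δ (n+1) (f n x) = f (n+1) (d x))
    (B B' : ℕ → Submodule R P) (hle : ∀ n, B n ≤ B' n)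
    (hfp : ∀ n, Module.FinitePresentation R (B' n ⧸ (B n).submoduleOf (B' n)))
    (hdB : ∀ n, ∀ x ∈ B n, d x ∈ B (n+1)) (hdB' : ∀ n, ∀ x ∈ B' n, d x ∈ B' (n+1))
    (h : ∀ n, B n →ₗ[R] G n)
    (heq : ∀ n x (hx : x ∈ B n), f n x = δ n (h n ⟨x, hx⟩) + h (n+1) ⟨d x, hdB n x hx⟩) :
    ∃ h' : ∀ n, B' n →ₗ[R] G n, (∀ n x (hx : x ∈ B n), h' n ⟨x, hle n hx⟩ = h n ⟨x, hx⟩) ∧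
      ∀ n x (hx : x ∈ B' n), f n x = δ n (h' n ⟨x, hx⟩) + h' (n+1) ⟨d x, hdB' n x hx⟩ := by
  choose g hg using fun n => EP n (B n) (B' n) (hle n) (hfp n) (h n)
  let dr : ∀ n, B' n →ₗ[R] B' (n+1) := fun n => d.restrict (hdB' n)
  let e' : ∀ n, B' n →ₗ[R] G (n+1) := fun n =>
    f n ∘ₗ (B' n).subtype - δ n ∘ₗ g n - g (n+1) ∘ₗ dr n
  have he'0 : ∀ n, ∀ x ∈ (B n).submoduleOf (B' n), e' n x = 0 := by
    rintro n ⟨x, hx'⟩ hx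
    have hx : x ∈ B n := hx
    have h1 : g n ⟨x, hx'⟩ = h n ⟨x, hx⟩ := hg n x hx
    have h2 : g (n+1) (dr n ⟨x, hx'⟩) = h (n+1) ⟨d x, hdB n x hx⟩ := hg (n+1) (d x) (hdB n x hx)
    simp only [e', LinearMap.sub_apply, LinearMap.comp_apply, h1, h2, Submodule.subtype_apply]
    rw [heq n x hx]
    abel
  have he'd : ∀ n x, δ (n+1) (e' n x) = e' (n+1) (dr n x) := by
    intro n x
    have h0 : dr (n+1) (dr n x) = 0 := Subtype.ext (hd x.1)
    have h1 : ((dr n x : B' (n+1)) : P) = d x := rfl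
    simp only [e', LinearMap.sub_apply, LinearMap.comp_apply, h0, Submodule.subtype_apply, map_sub,
      hδ, map_zero, hf, h1]
    abel
  obtain ⟨k, hk⟩ := stepB (T := fun n => B' n ⧸ (B n).submoduleOf (B' n)) hfp
    (fun n => Submodule.mapQ _ _ (dr n) (fun x hx => hdB n x.1 hx))
    (by
      intro n x
      obtain ⟨x, rfl⟩ := Submodule.mkQ_surjective _ x
      have h0 : dr (n+1) (dr n x) = 0 := Subtype.ext (hd x.1)
      exact (congrArg (Submodule.mkQ ((B (n+1+1)).submoduleOf (B' (n+1+1)))) h0).trans (map_zero _))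
    δ hδ LP (fun n => Submodule.liftQ _ (e' n) (he'0 n)) (by
      intro n x
      obtain ⟨x, rfl⟩ := Submodule.mkQ_surjective _ x
      exact he'd n x)
  refine ⟨fun n => g n + k n ∘ₗ Submodule.mkQ _, ?_, ?_⟩
  · intro n x hx
    have h0 : ((B n).submoduleOf (B' n)).mkQ ⟨x, hle n hx⟩ = 0 :=
      (Submodule.Quotient.mk_eq_zero _).2 hx
    rw [LinearMap.add_apply, LinearMap.comp_apply, h0, map_zero, add_zero]
    exact hg n x hx
  · intro n x hx
    have h1 : e' n ⟨x, hx⟩ = δ n (k n (Submodule.mkQ _ ⟨x, hx⟩)) +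
      k (n+1) (Submodule.mkQ _ (dr n ⟨x, hx⟩)) := hk n (Submodule.mkQ _ ⟨x, hx⟩)
    have h2 : f n x = e' n ⟨x, hx⟩ + δ n (g n ⟨x, hx⟩) + g (n+1) (dr n ⟨x, hx⟩) := by
      simp only [e', LinearMap.sub_apply, LinearMap.comp_apply, Submodule.subtype_apply]
      abel
    have h3 : (⟨d x, hdB' n x hx⟩ : B' (n+1)) = dr n ⟨x, hx⟩ := rfl
    rw [h2, h1, h3]
    simp only [LinearMap.add_apply, LinearMap.comp_apply, map_add]
    abel

theorem nullHomotopic {R : Type u} [Ring R] {P : Type u} [AddCommGroup P] [Module R P] {G : ℕ → Type u}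
    [∀ n, AddCommGroup (G n)] [∀ n, Module R (G n)]
    (d : P →ₗ[R] P) (hd : ∀ x, d (d x) = 0)
    (δ : ∀ n, G n →ₗ[R] G (n+1)) (hδ : ∀ n x, δ (n+1) (δ n x) = 0)
    (LP : ∀ n (X : Type u) [AddCommGroup X] [Module R X], Module.FinitePresentation R X →
      ∀ g : X →ₗ[R] G (n+1), (∀ x, δ (n+1) (g x) = 0) →
        ∃ h : X →ₗ[R] G n, ∀ x, δ n (h x) = g x)
    (EP : ∀ n (B B' : Submodule R P) (hle : B ≤ B'),
      Module.FinitePresentation R (B' ⧸ B.submoduleOf B') → ∀ g : B →ₗ[R] G n,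
        ∃ g' : B' →ₗ[R] G n, ∀ x (hx : x ∈ B), g' ⟨x, hle hx⟩ = g ⟨x, hx⟩)
    (f : ∀ n, P →ₗ[R] G (n+1)) (hf : ∀ n x, δ (n+1) (f n x) = f (n+1) (d x))
    (H : Set (Submodule R P)) (hsup : ∀ c ⊆ H, sSup c ∈ H)
    (hext : ∀ B ∈ H, ∀ X : Submodule R P, X.FG → ∃ B' ∈ H, ∃ Y : Submodule R P, Y.FG ∧
      B' = B ⊔ Y ∧ X ≤ B' ∧ Module.FinitePresentation R (B' ⧸ B.submoduleOf B')) :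
    ∃ h : ∀ n, P →ₗ[R] G n, ∀ n x, f n x = δ n (h n x) + h (n+1) (d x) := by
  let Z : Set (∀ n, P →ₗ.[R] G n) := {h | (∀ n, (h n).domain ∈ H) ∧
    ∃ hdB : ∀ n, ∀ x ∈ (h n).domain, d x ∈ (h (n+1)).domain,
      ∀ n x (hx : x ∈ (h n).domain),
        f n x = δ n (h n ⟨x, hx⟩) + h (n+1) ⟨d x, hdB n x hx⟩}
  obtain ⟨h, hh⟩ : ∃ m, Maximal (· ∈ Z) m := by
    apply zorn_le₀
    intro c hc hchain
    have hdir : ∀ n, DirectedOn (· ≤ ·) ((fun h : ∀ n, P →ₗ.[R] G n => h n) '' c) := by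
      rintro n _ ⟨a, ha, rfl⟩ _ ⟨b, hb, rfl⟩
      rcases hchain.total ha hb with hab | hab
      · exact ⟨b n, ⟨b, hb, rfl⟩, hab n, le_refl _⟩
      · exact ⟨a n, ⟨a, ha, rfl⟩, le_refl _, hab n⟩
    rcases c.eq_empty_or_nonempty with rfl | hne
    · refine ⟨fun n => ⊥, ⟨fun n => ?_, ?_, ?_⟩, by simp⟩
      · have := hsup ∅ (Set.empty_subset _)
        rwa [sSup_empty] at this
      · intro n x hx
        have hx : x ∈ (⊥ : Submodule R P) := hx
        rw [(Submodule.mem_bot R).1 hx, map_zero]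
        exact Submodule.zero_mem _
      · intro n x hx
        have hx' : x ∈ (⊥ : Submodule R P) := hx
        obtain rfl := (Submodule.mem_bot R).1 hx'
        have h1 : (⟨0, hx⟩ : ((⊥ : P →ₗ.[R] G n)).domain) = 0 := rfl
        have h2 : ∀ hy, (⟨d 0, hy⟩ : ((⊥ : P →ₗ.[R] G (n+1))).domain) = 0 :=
          fun hy => Subtype.ext (map_zero d)
        rw [h1, h2]
        simp
    · let ub : ∀ n, P →ₗ.[R] G n := fun n => LinearPMap.sSup _ (hdir n)
      have hle : ∀ a ∈ c, ∀ n, a n ≤ ub n := fun a ha n =>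
        LinearPMap.le_sSup (hdir n) ⟨a, ha, rfl⟩
      have hmem : ∀ n x, x ∈ (ub n).domain → ∃ a ∈ c, x ∈ (a n).domain := by
        intro n x hx
        obtain ⟨_, ⟨a, ha, rfl⟩, hxa⟩ := (LinearPMap.mem_domain_sSup_iff (hne.image _) (hdir n)).1 hx
        exact ⟨a, ha, hxa⟩
      have hdub : ∀ n, ∀ x ∈ (ub n).domain, d x ∈ (ub (n+1)).domain := by
        intro n x hx
        obtain ⟨a, ha, hxa⟩ := hmem n x hx
        exact (hle a ha (n+1)).1 ((hc ha).2.1 n x hxa)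
      refine ⟨ub, ⟨fun n => ?_, hdub, ?_⟩, fun a ha n => hle a ha n⟩
      · apply hsup
        rintro _ ⟨_, ⟨a, ha, rfl⟩, rfl⟩
        exact (hc ha).1 n
      · intro n x hx
        obtain ⟨a, ha, hxa⟩ := hmem n x hx
        obtain ⟨_, hda, hea⟩ := hc ha
        rw [hea n x hxa]
        rw [(hle a ha n).2 (x := ⟨x, hxa⟩) (y := ⟨x, hx⟩) rfl,
          (hle a ha (n+1)).2 (x := ⟨d x, hda n x hxa⟩) (y := ⟨d x, hdub n x hx⟩) rfl]
  obtain ⟨⟨hH, hdB, heq⟩, hmax⟩ := hh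
  have htop : ∀ k x, x ∈ (h k).domain := by
    intro k x
    classical
    choose! b hbH y hyfg hby hXb hbfp using hext
    let X : ℕ → Submodule R P := fun n => if n = k then Submodule.span R {x} else ⊥
    have hX : ∀ n, (X n).FG := by
      intro n
      by_cases hn : n = k
      · simp only [X, hn, if_true]; exact Submodule.fg_span_singleton x
      · simp only [X, hn, if_false]; exact Submodule.fg_bot
    let W : ∀ _ : ℕ, {w : Submodule R P // w.FG} := fun n => Nat.rec ⟨X 0, hX 0⟩
      (fun n w => ⟨X (n+1) ⊔ Submodule.map d (y (h n).domain w.1),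
        (hX _).sup ((hyfg _ (hH n) _ w.2).map d)⟩) n
    let B' : ℕ → Submodule R P := fun n => b (h n).domain (W n).1
    have hXW : ∀ n, X n ≤ (W n).1 := by
      rintro (_ | n)
      · exact le_refl _
      · exact le_sup_left
    have hle : ∀ n, (h n).domain ≤ B' n := fun n => by
      have := hby _ (hH n) _ (W n).2
      simp only [B']
      rw [this]
      exact le_sup_left
    have hdB' : ∀ n, ∀ z ∈ B' n, d z ∈ B' (n+1) := by
      intro n z hz
      simp only [B'] at hz
      rw [hby _ (hH n) _ (W n).2] at hz
      obtain ⟨z1, hz1, z2, hz2, rfl⟩ := Submodule.mem_sup.1 hz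
      rw [map_add]
      refine Submodule.add_mem _ (hle _ (hdB n _ hz1)) ?_
      apply hXb _ (hH (n+1)) _ (W (n+1)).2
      exact Submodule.mem_sup_right (Submodule.mem_map_of_mem hz2)
    obtain ⟨h', hh', heq'⟩ := extendStep d hd δ hδ LP EP f hf (fun n => (h n).domain) B' hle
      (fun n => hbfp _ (hH n) _ (W n).2) hdB hdB' (fun n => (h n).toFun) heq
    have hZ' : (fun n => (⟨B' n, h' n⟩ : P →ₗ.[R] G n)) ∈ Z :=
      ⟨fun n => hbH _ (hH n) _ (W n).2, hdB', heq'⟩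
    have := hmax hZ' (fun n => ⟨hle n, by
      rintro ⟨x, hx⟩ ⟨y, hy⟩ (rfl : x = y)
      exact (hh' n x hx).symm⟩)
    apply (this k).1
    apply hXb _ (hH k) _ (W k).2
    apply hXW k
    simp only [X, if_true]
    exact Submodule.mem_span_singleton_self x
  refine ⟨fun n => (h n).toFun ∘ₗ LinearMap.codRestrict _ LinearMap.id (htop n), fun n x => ?_⟩
  exact heq n x (htop n x)

end FpPer

namespace FpPer

theorem fp_trans {R : Type u} [Ring R] {P : Type u} [AddCommGroup P] [Module R P]
    (B B' B'' : Submodule R P) (h1 : B ≤ B') (h2 : B' ≤ B'')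
    (hf1 : Module.FinitePresentation R (B' ⧸ B.submoduleOf B'))
    (hf2 : Module.FinitePresentation R (B'' ⧸ B'.submoduleOf B'')) :
    Module.FinitePresentation R (B'' ⧸ B.submoduleOf B'') := by
  let q : (B'' ⧸ B.submoduleOf B'') →ₗ[R] (B'' ⧸ B'.submoduleOf B'') :=
    Submodule.factor (fun x hx => h1 hx)
  let i : (B' ⧸ B.submoduleOf B') →ₗ[R] (B'' ⧸ B.submoduleOf B'') :=
    Submodule.mapQ _ _ (Submodule.inclusion h2) (fun x hx => hx)
  have hi : Function.Injective i := by
    rw [injective_iff_map_eq_zero]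
    intro x hx
    obtain ⟨x, rfl⟩ := Submodule.mkQ_surjective _ x
    have hx : Submodule.mkQ (B.submoduleOf B'') (Submodule.inclusion h2 x) = 0 := hx
    exact (Submodule.Quotient.mk_eq_zero _).2 
      ((Submodule.Quotient.mk_eq_zero (B.submoduleOf B'')).1 hx)
  have hrange : LinearMap.range i = LinearMap.ker q := by
    ext x
    constructor
    · rintro ⟨y, rfl⟩
      obtain ⟨y, rfl⟩ := Submodule.mkQ_surjective _ y
      exact (Submodule.Quotient.mk_eq_zero _).2 y.2
    · intro hx
      obtain ⟨x, rfl⟩ := Submodule.mkQ_surjective _ x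
      have hx : x.1 ∈ B' := (Submodule.Quotient.mk_eq_zero (B'.submoduleOf B'')).1 hx
      exact ⟨Submodule.mkQ _ ⟨x.1, hx⟩, rfl⟩
  have : Module.FinitePresentation R (LinearMap.ker q) :=
    Module.FinitePresentation.of_equiv
      ((LinearEquiv.ofInjective i hi).trans (LinearEquiv.ofEq _ _ hrange))
  refine Module.finitePresentation_of_ker q ?_
  intro x
  obtain ⟨x, rfl⟩ := Submodule.mkQ_surjective _ x
  exact ⟨Submodule.mkQ _ x, rfl⟩

theorem fp_sup_range {R : Type u} [Ring R] {P : Type u} [AddCommGroup P] [Module R P]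
    (B : Submodule R P) (m : ℕ) (g : (Fin m → R) →ₗ[R] P) (hg : (B.comap g).FG) :
    Module.FinitePresentation R
      (↥(B ⊔ LinearMap.range g) ⧸ B.submoduleOf (B ⊔ LinearMap.range g)) := by
  let g' : (Fin m → R) →ₗ[R] ↥(B ⊔ LinearMap.range g) :=
    LinearMap.codRestrict _ g (fun x => Submodule.mem_sup_right ⟨x, rfl⟩)
  refine Module.finitePresentation_of_surjective
    ((B.submoduleOf (B ⊔ LinearMap.range g)).mkQ ∘ₗ g') ?_ ?_
  · intro x
    obtain ⟨⟨x, hx⟩, rfl⟩ := Submodule.mkQ_surjective _ x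
    obtain ⟨b, hb, _, ⟨y, rfl⟩, rfl⟩ := Submodule.mem_sup.1 hx
    refine ⟨y, ?_⟩
    refine (Submodule.Quotient.eq _).2 ?_
    change g y - (b + g y) ∈ B
    simpa using hb
  · have : LinearMap.ker ((B.submoduleOf (B ⊔ LinearMap.range g)).mkQ ∘ₗ g') = B.comap g := by
      ext x
      exact Submodule.Quotient.mk_eq_zero _
    rw [this]
    exact hg

section Hill

variable {R : Type u} [Ring R] {P : Type u} [AddCommGroup P] [Module R P]
  {Λ : Type u} (rk : Λ → ℕ) (m : Λ → ℕ) (ψ : ∀ a, (Fin (m a) → R) →ₗ[R] P)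

/-- The submodule generated by a set of cells. -/
def PS (S : Set Λ) : Submodule R P := ⨆ a ∈ S, LinearMap.range (ψ a)

/-- The attaching submodule of a cell. -/
def SS (a : Λ) : Submodule R (Fin (m a) → R) :=
  (PS m ψ {b | b ≠ a ∧ rk b ≤ rk a}).comap (ψ a)

/-- Closed sets of cells. -/
def Cl (S : Set Λ) : Prop :=
  ∀ a ∈ S, (SS rk m ψ a).map (ψ a) ≤ PS m ψ (S ∩ {b | rk b < rk a})

theorem PS_mono {S S' : Set Λ} (h : S ⊆ S') : PS m ψ S ≤ PS m ψ S' :=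
  biSup_mono (fun _ ha => h ha)

theorem range_le_PS {S : Set Λ} {a : Λ} (ha : a ∈ S) : LinearMap.range (ψ a) ≤ PS m ψ S :=
  le_biSup (fun a => LinearMap.range (ψ a)) ha

theorem PS_le {S : Set Λ} {B : Submodule R P} (h : ∀ a ∈ S, LinearMap.range (ψ a) ≤ B) :
    PS m ψ S ≤ B := iSup₂_le h

theorem PS_union (S S' : Set Λ) : PS m ψ (S ∪ S') = PS m ψ S ⊔ PS m ψ S' :=
  iSup_union

/-- One level down. -/
theorem PS_step (hSS : ∀ a, (SS rk m ψ a).map (ψ a) ≤ PS m ψ {b | rk b < rk a})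
    {S : Set Λ} (hS : Cl rk m ψ S) (k : ℕ) (x : P)
    (hx : x ∈ PS m ψ (S ∩ {b | rk b < k + 1})) (hx' : x ∈ PS m ψ {b | rk b < k}) :
    x ∈ PS m ψ (S ∩ {b | rk b < k}) := by
  classical
  -- write x as a sum over cells of rank k plus lower
  have hdec : ∀ y ∈ PS m ψ (S ∩ {b | rk b < k + 1}), ∃ z ∈ PS m ψ (S ∩ {b | rk b < k}),
      ∃ (s : Finset Λ) (v : ∀ a, Fin (m a) → R), (∀ a ∈ s, a ∈ S ∧ rk a = k) ∧
        y = z + ∑ a ∈ s, ψ a (v a) := by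
    intro y hy
    have hsplit : S ∩ {b | rk b < k + 1} = (S ∩ {b | rk b < k}) ∪ (S ∩ {b | rk b = k}) := by
      ext b
      simp only [Set.mem_inter_iff, Set.mem_ofPred_eq, Set.mem_union]
      constructor
      · rintro ⟨h1, h2⟩
        rcases Nat.lt_succ_iff_lt_or_eq.1 h2 with h | h
        · exact Or.inl ⟨h1, h⟩
        · exact Or.inr ⟨h1, h⟩
      · rintro (⟨h1, h2⟩ | ⟨h1, h2⟩)
        · exact ⟨h1, by omega⟩
        · exact ⟨h1, by omega⟩
    rw [hsplit, PS_union] at hy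
    obtain ⟨z, hz, w, hw, rfl⟩ := Submodule.mem_sup.1 hy
    refine ⟨z, hz, ?_⟩
    rw [PS, iSup_subtype', Submodule.mem_iSup_iff_exists_finsupp] at hw
    obtain ⟨f, hf, rfl⟩ := hw
    choose v hv using fun i => hf i
    refine ⟨f.support.map (Function.Embedding.subtype _),
      fun a => if h : a ∈ S ∩ {b | rk b = k} then v ⟨a, h⟩ else 0, ?_, ?_⟩
    · intro a ha
      obtain ⟨⟨b, hb⟩, _, rfl⟩ := Finset.mem_map.1 ha
      exact hb
    · rw [Finset.sum_map, Finsupp.sum]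
      congr 1
      refine Finset.sum_congr rfl fun i _ => ?_
      have hi : (i : Λ) ∈ S ∩ {b | rk b = k} := i.2
      change f i = ψ i (if h : (i : Λ) ∈ S ∩ {b | rk b = k} then v ⟨i, h⟩ else 0)
      rw [dif_pos hi]
      exact (hv i).symm
  obtain ⟨z, hz, s, v, hs, rfl⟩ := hdec x hx
  refine Submodule.add_mem _ hz (Submodule.sum_mem _ fun a ha => ?_)
  obtain ⟨haS, hak⟩ := hs a ha
  have hva : v a ∈ SS rk m ψ a := by
    change ψ a (v a) ∈ PS m ψ {b | b ≠ a ∧ rk b ≤ rk a}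
    have h1 : ψ a (v a) = (z + ∑ b ∈ s, ψ b (v b)) - z - ∑ b ∈ s.erase a, ψ b (v b) := by
      rw [← Finset.add_sum_erase s _ ha]
      abel
    have hlow : PS m ψ {b | rk b < k} ≤ PS m ψ {b | b ≠ a ∧ rk b ≤ rk a} :=
      PS_mono m ψ (fun b (hb : rk b < k) => ⟨by rintro rfl; omega, by omega⟩)
    rw [h1]
    refine Submodule.sub_mem _ (Submodule.sub_mem _ (hlow hx')
      (hlow (PS_mono m ψ Set.inter_subset_right hz))) (Submodule.sum_mem _ fun b hb => ?_)
    obtain ⟨hne, hbs⟩ := Finset.mem_erase.1 hb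
    have hmem : b ∈ {b | b ≠ a ∧ rk b ≤ rk a} := ⟨hne, by rw [(hs b hbs).2, hak]⟩
    exact range_le_PS m ψ hmem ⟨v b, rfl⟩
  have := hS a haS (Submodule.mem_map_of_mem hva)
  rwa [hak] at this

theorem PS_inter (hSS : ∀ a, (SS rk m ψ a).map (ψ a) ≤ PS m ψ {b | rk b < rk a})
    {S : Set Λ} (hS : Cl rk m ψ S) (k : ℕ) (x : P)
    (hx : x ∈ PS m ψ S) (hx' : x ∈ PS m ψ {b | rk b < k}) :
    x ∈ PS m ψ (S ∩ {b | rk b < k}) := by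
  have h1 : ∃ j, x ∈ PS m ψ (S ∩ {b | rk b < k + j}) := by
    have hU : PS m ψ S ≤ ⨆ j : ℕ, PS m ψ (S ∩ {b | rk b < k + j}) := by
      refine PS_le m ψ fun a ha => ?_
      have hmem : a ∈ S ∩ {b | rk b < k + (rk a + 1)} :=
        ⟨ha, show rk a < k + (rk a + 1) by omega⟩
      exact le_trans (range_le_PS m ψ hmem)
        (le_iSup (fun j => PS m ψ (S ∩ {b | rk b < k + j})) (rk a + 1))
    refine (Submodule.mem_iSup_of_directed _ ?_).1 (hU hx)
    refine Monotone.directed_le fun i j hij => PS_mono m ψ ?_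
    rintro b ⟨h1, h2⟩
    have h2 : rk b < k + i := h2
    exact ⟨h1, show rk b < k + j by omega⟩
  obtain ⟨j, hj⟩ := h1
  induction j with
  | zero => exact hj
  | succ j ih =>
    apply ih
    refine PS_step rk m ψ hSS hS (k + j) x hj (PS_mono m ψ ?_ hx')
    intro b (hb : rk b < k)
    exact lt_of_lt_of_le hb (by omega)

/-- Relative finite presentation. -/
def Good (B B' : Submodule R P) : Prop :=
  B ≤ B' ∧ (∃ Y : Submodule R P, Y.FG ∧ B' = B ⊔ Y) ∧
    Module.FinitePresentation R (B' ⧸ B.submoduleOf B')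

theorem Good.refl (B : Submodule R P) : Good B B := by
  refine ⟨le_refl _, ⟨⊥, Submodule.fg_bot, by simp⟩, ?_⟩
  have : Subsingleton (B ⧸ B.submoduleOf B) := by
    rw [Submodule.Quotient.subsingleton_iff]
    exact Submodule.submoduleOf_self B
  infer_instance

theorem Good.trans {B B' B'' : Submodule R P} (h : Good B B') (h' : Good B' B'') : Good B B'' := by
  obtain ⟨h1, ⟨Y, hY, rfl⟩, hf⟩ := h
  obtain ⟨h1', ⟨Y', hY', rfl⟩, hf'⟩ := h'
  exact ⟨h1.trans h1', ⟨Y ⊔ Y', hY.sup hY', sup_assoc _ _ _⟩, fp_trans _ _ _ h1 h1' hf hf'⟩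

/-- Closed set `S` can be enlarged so as to contain `X`. -/
def Enl (X : Submodule R P) : Prop :=
  ∀ S, Cl rk m ψ S → ∃ S', Cl rk m ψ S' ∧ Good (PS m ψ S) (PS m ψ S') ∧ X ≤ PS m ψ S'

theorem Enl.sup {X Y : Submodule R P} (hX : Enl rk m ψ X) (hY : Enl rk m ψ Y) :
    Enl rk m ψ (X ⊔ Y) := by
  intro S hS
  obtain ⟨S', hS', hg, hx⟩ := hX S hS
  obtain ⟨S'', hS'', hg', hy⟩ := hY S' hS'
  exact ⟨S'', hS'', hg.trans hg', sup_le (hx.trans hg'.1) hy⟩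

theorem Enl.mono {X Y : Submodule R P} (hX : Enl rk m ψ X) (hY : Y ≤ X) :
    Enl rk m ψ Y := by
  intro S hS
  obtain ⟨S', hS', hg, hx⟩ := hX S hS
  exact ⟨S', hS', hg, hY.trans hx⟩

theorem enl_of_fg {T : Set Λ} (hT : ∀ a ∈ T, Enl rk m ψ (LinearMap.range (ψ a)))
    (X : Submodule R P) (hX : X.FG) (hXT : X ≤ PS m ψ T) : Enl rk m ψ X := by
  have hel : ∀ x ∈ PS m ψ T, Enl rk m ψ (Submodule.span R {x}) := by
    intro x hx
    rw [PS, iSup_subtype'] at hx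
    refine Submodule.iSup_induction _ (motive := fun x => Enl rk m ψ (Submodule.span R {x})) hx
      ?_ ?_ ?_
    · rintro ⟨a, ha⟩ x hx
      exact (hT a ha).mono _ _ _ ((Submodule.span_singleton_le_iff_mem _ _).2 hx)
    · intro S hS
      exact ⟨S, hS, Good.refl _, by simp⟩
    · intro x y hx hy
      refine (hx.sup _ _ _ hy).mono _ _ _ ((Submodule.span_singleton_le_iff_mem _ _).2 ?_)
      exact Submodule.add_mem _ (Submodule.mem_sup_left (Submodule.mem_span_singleton_self x))
        (Submodule.mem_sup_right (Submodule.mem_span_singleton_self y))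
  refine Submodule.fg_induction (motive := fun X _ => X ≤ PS m ψ T → Enl rk m ψ X) ?_ ?_ X hX hXT
  · intro x hx
    exact hel x (hx (Submodule.mem_span_singleton_self x))
  · intro M N _ _ hM hN h
    exact (hM (le_sup_left.trans h)).sup _ _ _ (hN (le_sup_right.trans h))

theorem enl_range (hfg : ∀ a, (SS rk m ψ a).FG)
    (hSS : ∀ a, (SS rk m ψ a).map (ψ a) ≤ PS m ψ {b | rk b < rk a}) :
    ∀ n a, rk a = n → Enl rk m ψ (LinearMap.range (ψ a)) := by
  intro n
  induction n using Nat.strong_induction_on with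
  | _ n ih =>
  rintro a rfl
  intro S hS
  obtain ⟨S₁, hS₁, hg, hx⟩ := enl_of_fg rk m ψ (T := {b | rk b < rk a})
    (fun b hb => ih (rk b) hb b rfl) _ ((hfg a).map (ψ a)) (hSS a) S hS
  have hx' : (SS rk m ψ a).map (ψ a) ≤ PS m ψ (S₁ ∩ {b | rk b < rk a}) := fun y hy =>
    PS_inter rk m ψ hSS hS₁ _ y (hx hy) (hSS a hy)
  by_cases haS : a ∈ S₁
  · exact ⟨S₁, hS₁, hg, range_le_PS m ψ haS⟩
  refine ⟨S₁ ∪ {a}, ?_, hg.trans ?_, range_le_PS m ψ (Or.inr rfl)⟩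
  · rintro b (hb | rfl)
    · exact (hS₁ b hb).trans (PS_mono m ψ (Set.inter_subset_inter_left _ Set.subset_union_left))
    · exact hx'.trans (PS_mono m ψ (Set.inter_subset_inter_left _ Set.subset_union_left))
  · have h1 : PS m ψ (S₁ ∪ {a}) = PS m ψ S₁ ⊔ LinearMap.range (ψ a) := by
      rw [PS_union]
      congr 1
      simp [PS]
    have h2 : (PS m ψ S₁).comap (ψ a) = SS rk m ψ a := by
      apply le_antisymm
      · intro v hv
        have hv : ψ a v ∈ PS m ψ S₁ := hv
        have : ψ a v ∈ PS m ψ (S₁ ∩ {b | rk b < rk a + 1}) := by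
          refine PS_inter rk m ψ hSS hS₁ _ _ hv ?_
          refine range_le_PS m ψ (a := a) ?_ ⟨v, rfl⟩
          exact Nat.lt_succ_self _
        refine PS_mono m ψ ?_ this
        rintro b ⟨hb, hb'⟩
        exact ⟨fun h => haS (h ▸ hb), Nat.lt_succ_iff.1 hb'⟩
      · rw [← Submodule.map_le_iff_le_comap]
        exact hx
    rw [h1]
    exact ⟨le_sup_left, ⟨_, Module.Finite.iff_fg.1 (Module.Finite.range (ψ a)), rfl⟩,
      fp_sup_range _ _ _ (by rw [h2]; exact hfg a)⟩

theorem hill (hfg : ∀ a, (SS rk m ψ a).FG)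
    (hSS : ∀ a, (SS rk m ψ a).map (ψ a) ≤ PS m ψ {b | rk b < rk a})
    (htop : PS m ψ Set.univ = ⊤) :
    ∃ H : Set (Submodule R P), (∀ c ⊆ H, sSup c ∈ H) ∧
      ∀ B ∈ H, ∀ X : Submodule R P, X.FG → ∃ B' ∈ H, ∃ Y : Submodule R P, Y.FG ∧
      B' = B ⊔ Y ∧ X ≤ B' ∧ Module.FinitePresentation R (B' ⧸ B.submoduleOf B') := by
  refine ⟨{B | ∃ S, Cl rk m ψ S ∧ B = PS m ψ S}, ?_, ?_⟩
  · intro c hc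
    let U : Set Λ := ⋃₀ {S | Cl rk m ψ S ∧ PS m ψ S ∈ c}
    refine ⟨U, ?_, ?_⟩
    · rintro a ⟨S, ⟨hS, hSc⟩, ha⟩
      exact (hS a ha).trans (PS_mono m ψ (Set.inter_subset_inter_left _
        (Set.subset_sUnion_of_mem (show S ∈ {S | Cl rk m ψ S ∧ PS m ψ S ∈ c} from ⟨hS, hSc⟩))))
    · apply le_antisymm
      · refine sSup_le fun B hB => ?_
        obtain ⟨S, hS, rfl⟩ := hc hB
        exact PS_mono m ψ
          (Set.subset_sUnion_of_mem (show S ∈ {S | Cl rk m ψ S ∧ PS m ψ S ∈ c} from ⟨hS, hB⟩))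
      · refine PS_le m ψ ?_
        rintro a ⟨S, ⟨hS, hSc⟩, ha⟩
        exact (range_le_PS m ψ ha).trans (le_sSup hSc)
  · rintro _ ⟨S, hS, rfl⟩ X hX
    obtain ⟨S', hS', ⟨_, ⟨Y, hY, hY'⟩, hfp⟩, hx⟩ := enl_of_fg rk m ψ (T := Set.univ)
      (fun a _ => enl_range rk m ψ hfg hSS _ a rfl) X hX (by rw [htop]; exact le_top) S hS
    exact ⟨_, ⟨S', hS', rfl⟩, Y, hY, hY', hx, hfp⟩

end Hill

end FpPer

namespace FpPer

/-- An attaching problem over a map. -/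
structure Cell {R : Type u} [Ring R] {A P : Type u} [AddCommGroup A] [Module R A]
    [AddCommGroup P] [Module R P] (π : P →ₗ[R] A) : Type u where
  m : ℕ
  S : Submodule R (Fin m → R)
  fg : S.FG
  φ : S →ₗ[R] P
  χ : (Fin m → R) →ₗ[R] A
  comp : ∀ s : S, χ s = π (φ s)

theorem cellStep {R : Type u} [Ring R] {A P : Type u} [AddCommGroup A] [Module R A]
    [AddCommGroup P] [Module R P] (π : P →ₗ[R] A) :
    ∃ (P' : ModuleCat.{u} R) (π' : P' →ₗ[R] A) (i : P →ₗ[R] P')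
      (C : Type u) (m : C → ℕ) (ψ : ∀ c, (Fin (m c) → R) →ₗ[R] P'),
      Function.Injective i ∧ (∀ x, π' (i x) = π x) ∧
      (LinearMap.range i ⊔ ⨆ c, LinearMap.range (ψ c) = ⊤) ∧
      (∀ c, ((LinearMap.range i ⊔ ⨆ c' : {c' // c' ≠ c}, LinearMap.range (ψ c')).comap (ψ c)).FG) ∧
      (∀ c, ((LinearMap.range i ⊔ ⨆ c' : {c' // c' ≠ c}, LinearMap.range (ψ c')).comap (ψ c)).map
        (ψ c) ≤ LinearMap.range i) ∧
      (∀ (k : ℕ) (S : Submodule R (Fin k → R)), S.FG → ∀ (φ : S →ₗ[R] P)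
        (χ : (Fin k → R) →ₗ[R] A), (∀ s : S, χ s = π (φ s)) →
        ∃ g : (Fin k → R) →ₗ[R] P', (∀ s : S, g s = i (φ s)) ∧ ∀ v, π' (g v) = χ v) := by
  classical
  let C := Cell π
  let F := Π₀ c : C, (Fin c.m → R)
  let α : (Π₀ c : C, c.S) →ₗ[R] P := DFinsupp.lsum ℕ (fun c => c.φ)
  let β : (Π₀ c : C, c.S) →ₗ[R] F := DFinsupp.mapRange.linearMap (fun c => c.S.subtype)
  let χ' : F →ₗ[R] A := DFinsupp.lsum ℕ (fun c => c.χ)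
  have hβ : Function.Injective β := by
    intro t t' h
    ext1 c
    have := DFunLike.congr_fun h c
    exact Subtype.ext this
  let N : Submodule R (P × F) := LinearMap.range (α.prod (-β))
  have hχ : ∀ t, χ' (β t) = π (α t) := by
    intro t
    have : χ' ∘ₗ β = π ∘ₗ α := by
      ext c s
      have h1 : β (DFinsupp.single c s) = DFinsupp.single c (s : Fin c.m → R) := by
        refine (DFinsupp.mapRange.linearMap_apply _ _).trans ?_
        exact DFinsupp.mapRange_single
      change χ' (β (DFinsupp.single c s)) = π (α (DFinsupp.single c s))
      rw [h1]
      have h2 : χ' (DFinsupp.single c (s : Fin c.m → R)) = c.χ s :=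
        DFinsupp.lsum_single ℕ (fun c : C => c.χ) c _
      have h3 : α (DFinsupp.single c s) = c.φ s :=
        DFinsupp.lsum_single ℕ (fun c : C => c.φ) c _
      rw [h2, h3, c.comp]
    exact LinearMap.congr_fun this t
  let P' := (P × F) ⧸ N
  let π' : P' →ₗ[R] A := N.liftQ (π.coprod χ') (by
    rintro _ ⟨t, rfl⟩
    simp [hχ])
  let i : P →ₗ[R] P' := N.mkQ ∘ₗ LinearMap.inl R P F
  let ψ : ∀ c : C, (Fin c.m → R) →ₗ[R] P' := fun c =>
    N.mkQ ∘ₗ LinearMap.inr R P F ∘ₗ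
      (DFinsupp.lsingle (R := R) (M := fun c : C => Fin c.m → R) c)
  have hψ : ∀ (c : C) (s : c.S), ψ c s = i (c.φ s) := by
    intro c s
    symm
    refine (Submodule.Quotient.eq N).2 ?_
    refine ⟨DFinsupp.single c s, ?_⟩
    refine Prod.ext ?_ ?_
    · simp [α]
    · simp [β]
      rfl
  let q : ∀ c : C, P' →ₗ[R] (Fin c.m → R) ⧸ c.S := fun c =>
    N.liftQ (c.S.mkQ ∘ₗ DFinsupp.lapply c ∘ₗ LinearMap.snd R P F) (by
      rintro _ ⟨t, rfl⟩
      change c.S.mkQ ((-β t) c) = 0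
      refine (Submodule.Quotient.mk_eq_zero _).2 ?_
      exact c.S.neg_mem (t c).2)
  have hcomap : ∀ c : C, ∀ v, ψ c v ∈
      (LinearMap.range i ⊔ ⨆ c' : {c' // c' ≠ c}, LinearMap.range (ψ c')) → v ∈ c.S := by
    intro c v hv
    have hle : (LinearMap.range i ⊔ ⨆ c' : {c' // c' ≠ c}, LinearMap.range (ψ c')) ≤
        LinearMap.ker (q c) := by
      refine sup_le ?_ (iSup_le ?_)
      · rintro _ ⟨x, rfl⟩
        change c.S.mkQ (0 : Fin c.m → R) = 0
        exact map_zero _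
      · rintro ⟨c', hc'⟩ _ ⟨x, rfl⟩
        change c.S.mkQ ((DFinsupp.single c' x : F) c) = 0
        rw [DFinsupp.single_eq_of_ne (Ne.symm hc')]
        simp
    have h0 : c.S.mkQ ((DFinsupp.single c v : F) c) = 0 := hle hv
    rw [DFinsupp.single_eq_same] at h0
    exact (Submodule.Quotient.mk_eq_zero _).1 h0
  have hcomap' : ∀ c : C, (LinearMap.range i ⊔ ⨆ c' : {c' // c' ≠ c},
      LinearMap.range (ψ c')).comap (ψ c) = c.S := by
    intro c
    refine le_antisymm (hcomap c) ?_
    intro s hs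
    refine Submodule.mem_sup_left ?_
    exact ⟨c.φ ⟨s, hs⟩, (hψ c ⟨s, hs⟩).symm⟩
  refine ⟨ModuleCat.of R P', π', i, C, fun c => c.m, ψ, ?_, ?_, ?_, ?_, ?_, ?_⟩
  · rw [injective_iff_map_eq_zero]
    intro x hx
    obtain ⟨t, ht⟩ := (Submodule.Quotient.mk_eq_zero N).1 hx
    have h2 : -β t = 0 := congrArg Prod.snd ht
    have h1 : α t = x := congrArg Prod.fst ht
    have : t = 0 := hβ (by rw [map_zero]; exact neg_eq_zero.1 h2)
    rw [← h1, this, map_zero]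
  · intro x
    change π x + χ' 0 = π x
    simp
  · rw [eq_top_iff]
    intro y _
    obtain ⟨⟨x, f⟩, rfl⟩ := N.mkQ_surjective y
    have h1 : N.mkQ (x, f) = i x + N.mkQ (0, f) := by
      change _ = N.mkQ (x, 0) + _
      rw [← map_add]
      simp
    rw [h1]
    refine Submodule.add_mem_sup ⟨x, rfl⟩ ?_
    have h2 : ∀ f : F, N.mkQ (LinearMap.inr R P F f) ∈ ⨆ c, LinearMap.range (ψ c) := by
      intro f
      induction f using DFinsupp.induction with
      | h0 =>
        rw [map_zero, map_zero]
        exact Submodule.zero_mem _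
      | ha c b f _ _ ih =>
        rw [map_add, map_add]
        exact Submodule.add_mem _ (Submodule.mem_iSup_of_mem c ⟨b, rfl⟩) ih
    exact h2 f
  · intro c
    rw [hcomap']
    exact c.fg
  · intro c
    rw [hcomap']
    rintro _ ⟨s, hs, rfl⟩
    exact ⟨c.φ ⟨s, hs⟩, (hψ c ⟨s, hs⟩).symm⟩
  · intro k S hS φ χ h
    let c : C := ⟨k, S, hS, φ, χ, h⟩
    refine ⟨ψ c, hψ c, ?_⟩
    intro v
    change π 0 + χ' (DFinsupp.single c v) = χ v
    rw [map_zero, zero_add]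
    exact DFinsupp.lsum_single ℕ (fun c : C => c.χ) c v

theorem colim {R : Type u} [Ring R] (X : ℕ → ModuleCat.{u} R) (i : ∀ n, X n →ₗ[R] X (n+1))
    (hi : ∀ n, Function.Injective (i n)) :
    ∃ (P : ModuleCat.{u} R) (ι : ∀ n, X n →ₗ[R] P), (∀ n, Function.Injective (ι n)) ∧
      (∀ n x, ι (n+1) (i n x) = ι n x) ∧ (∀ x, ∃ n y, ι n y = x) ∧
      ∀ (A : ModuleCat.{u} R) (π : ∀ n, X n →ₗ[R] A), (∀ n x, π (n+1) (i n x) = π n x) →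
        ∃ p : P →ₗ[R] A, ∀ n x, p (ι n x) = π n x := by
  let F : ℕ ⥤ ModuleCat.{u} R := Functor.ofSequence (fun n => ModuleCat.ofHom (i n))
  have : PreservesFilteredColimitsOfSize.{0, 0} (forget (ModuleCat.{u} R)) :=
    preservesFilteredColimitsOfSize_shrink.{0, u, 0, u} _
  have : PreservesColimitsOfShape ℕ (forget (ModuleCat.{u} R)) :=
    PreservesFilteredColimitsOfSize.preserves_filtered_colimits ℕ
  have hF : ∀ n x, F.map (homOfLE (Nat.le_add_right n 1)) x = i n x := by
    intro n x
    have := Functor.ofSequence_map_homOfLE_succ (fun n => ModuleCat.ofHom (i n)) n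
    exact congrArg (fun f => f.hom x) this
  have hinj : ∀ n k (f : n ⟶ n + k), Function.Injective (F.map f) := by
    intro n k
    induction k with
    | zero =>
      intro f
      have : f = 𝟙 n := rfl
      rw [this, F.map_id]
      exact Function.injective_id
    | succ k ih =>
      intro f
      have : f = homOfLE (Nat.le_add_right n k) ≫ homOfLE (Nat.le_add_right (n+k) 1) := rfl
      rw [this, F.map_comp]
      intro x y hxy
      apply ih (homOfLE (Nat.le_add_right n k))
      apply hi
      rw [← hF, ← hF]
      exact hxy
  refine ⟨colimit F, fun n => (colimit.ι F n).hom, ?_, ?_, ?_, ?_⟩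
  · intro n x y hxy
    obtain ⟨k, f, g, h⟩ := Concrete.colimit_exists_of_rep_eq F x y hxy
    have : f = g := Subsingleton.elim _ _
    subst this
    obtain ⟨l, rfl⟩ := Nat.exists_eq_add_of_le (leOfHom f)
    exact hinj n l f h
  · intro n x
    refine (congrArg (colimit.ι F (n+1)).hom (hF n x).symm).trans ?_
    exact congrArg (fun f => f.hom x) (colimit.w F (homOfLE (Nat.le_add_right n 1)))
  · intro x
    exact Concrete.colimit_exists_rep F x
  · intro A π hπ
    let c : Cocone F := ⟨A, NatTrans.ofSequence (fun n => ModuleCat.ofHom (π n)) (by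
      intro n
      ext x
      change π (n+1) (F.map (homOfLE (Nat.le_add_right n 1)) x) = π n x
      exact (congrArg (π (n+1)) (hF n x)).trans (hπ n x))⟩
    refine ⟨(colimit.desc F c).hom, ?_⟩
    intro n x
    exact congrArg (fun f => f.hom x) (colimit.ι_desc c n)

end FpPer

namespace FpPer

theorem tower {R : Type u} [Ring R] (A : ModuleCat.{u} R) :
    ∃ (P : ModuleCat.{u} R) (π : P →ₗ[R] A),
      (∀ (k : ℕ) (S : Submodule R (Fin k → R)), S.FG → ∀ (φ : S →ₗ[R] P)
        (χ : (Fin k → R) →ₗ[R] A), (∀ s : S, χ s = π (φ s)) →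
        ∃ g : (Fin k → R) →ₗ[R] P, (∀ s : S, g s = φ s) ∧ ∀ v, π (g v) = χ v) ∧
      ∃ H : Set (Submodule R P), (∀ c ⊆ H, sSup c ∈ H) ∧
      ∀ B ∈ H, ∀ X : Submodule R P, X.FG → ∃ B' ∈ H, ∃ Y : Submodule R P, Y.FG ∧
      B' = B ⊔ Y ∧ X ≤ B' ∧ Module.FinitePresentation R (B' ⧸ B.submoduleOf B') := by
  have step := fun X : (Σ P : ModuleCat.{u} R, (P →ₗ[R] A)) => cellStep X.2
  choose P' π' i C m ψ hinj hπ htop hfg hSS hrlp using step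
  let st : ℕ → (Σ P : ModuleCat.{u} R, (P →ₗ[R] A)) := fun n =>
    Nat.rec ⟨ModuleCat.of R PUnit.{u+1}, 0⟩ (fun _ X => ⟨P' X, π' X⟩) n
  obtain ⟨P, ι, hι, hcomp, hsurj, hdesc⟩ := colim (fun n => (st n).1) (fun n => i (st n))
    (fun n => hinj (st n))
  obtain ⟨p, hp⟩ := hdesc A (fun n => (st n).2) (fun n x => hπ (st n) x)
  have hmono : Monotone (fun n => LinearMap.range (ι n)) := by
    refine monotone_nat_of_le_succ fun n => ?_
    rintro _ ⟨x, rfl⟩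
    exact ⟨i (st n) x, hcomp n x⟩
  have hι_i : ∀ n, (LinearMap.range (i (st n))).map (ι (n+1)) = LinearMap.range (ι n) := by
    intro n
    ext y
    constructor
    · rintro ⟨_, ⟨x, rfl⟩, rfl⟩
      exact ⟨x, (hcomp n x).symm⟩
    · rintro ⟨x, rfl⟩
      exact ⟨_, ⟨x, rfl⟩, hcomp n x⟩
  refine ⟨P, p, ?_, ?_⟩
  · intro k S hS φ χ h
    have hfgr : (LinearMap.range φ).FG := by
      have : Module.Finite R S := Module.Finite.iff_fg.2 hS
      exact Module.Finite.iff_fg.1 (Module.Finite.range φ)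
    obtain ⟨n, hn⟩ : ∃ n, LinearMap.range φ ≤ LinearMap.range (ι n) := by
      have hle : LinearMap.range φ ≤ ⨆ n, LinearMap.range (ι n) := by
        intro x _
        obtain ⟨n, y, rfl⟩ := hsurj x
        exact Submodule.mem_iSup_of_mem n ⟨y, rfl⟩
      have hc := (Submodule.fg_iff_compact _).1 hfgr
      obtain ⟨_, ⟨n, rfl⟩, hn⟩ := (CompleteLattice.isCompactElement_iff_le_of_directed_sSup_le _ _).1
        hc (Set.range fun n => LinearMap.range (ι n)) ⟨_, ⟨0, rfl⟩⟩
        (directedOn_range.2 hmono.directed_le) hle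
      exact ⟨n, hn⟩
    let e := LinearEquiv.ofInjective (ι n) (hι n)
    let φ' : S →ₗ[R] (st n).1 := e.symm.toLinearMap ∘ₗ
      LinearMap.codRestrict (LinearMap.range (ι n)) φ (fun x => hn ⟨x, rfl⟩)
    have hφ' : ∀ s, ι n (φ' s) = φ s := by
      intro s
      have := e.apply_symm_apply
        (LinearMap.codRestrict (LinearMap.range (ι n)) φ (fun x => hn ⟨x, rfl⟩) s)
      exact congrArg Subtype.val this
    obtain ⟨g, hg, hg'⟩ := hrlp (st n) k S hS φ' χ (by
      intro s
      rw [h, ← hφ', hp])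
    refine ⟨ι (n+1) ∘ₗ g, ?_, ?_⟩
    · intro s
      rw [← hφ', ← hcomp]
      exact congrArg (ι (n+1)) (hg s)
    · intro v
      rw [← hg']
      exact hp (n+1) (g v)
  · let Λ : Type u := Σ n : ℕ, C (st n)
    let rk : Λ → ℕ := fun a => a.1
    let mm : Λ → ℕ := fun a => m (st a.1) a.2
    let Ψ : ∀ a : Λ, (Fin (mm a) → R) →ₗ[R] P := fun a => ι (a.1+1) ∘ₗ ψ (st a.1) a.2
    have hΨ : ∀ n c, LinearMap.range (Ψ ⟨n, c⟩) = (LinearMap.range (ψ (st n) c)).map (ι (n+1)) :=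
      fun n c => LinearMap.range_comp _ _
    have hL : ∀ n, PS mm Ψ {b | rk b < n} = LinearMap.range (ι n) := by
      intro n
      apply le_antisymm
      · refine PS_le _ _ ?_
        rintro ⟨k, c⟩ hk
        have hk : k < n := hk
        refine le_trans ?_ (hmono (show k + 1 ≤ n from hk))
        rintro _ ⟨x, rfl⟩
        exact ⟨_, rfl⟩
      · induction n with
        | zero =>
          rintro _ ⟨x, rfl⟩
          have hx : x = 0 := Subsingleton.elim (α := PUnit.{u+1}) x 0
          rw [hx, map_zero]
          exact Submodule.zero_mem _
        | succ n ih =>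
          rw [← Submodule.map_top]
          have ht : (⊤ : Submodule R (st (n+1)).1) = _ := (htop (st n)).symm
          rw [ht, Submodule.map_sup, Submodule.map_iSup]
          refine sup_le ?_ (iSup_le fun c => ?_)
          · refine (hι_i n).le.trans (ih.trans (PS_mono _ _ ?_))
            intro b (hb : rk b < n)
            exact Nat.lt_succ_of_lt hb
          · refine (hΨ n c).ge.trans (range_le_PS mm Ψ ?_)
            exact Nat.lt_succ_self n
    have hQ : ∀ n c, PS mm Ψ {b | b ≠ ⟨n, c⟩ ∧ rk b ≤ n} =
        (LinearMap.range (i (st n)) ⊔ ⨆ c' : {c' // c' ≠ c},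
          LinearMap.range (ψ (st n) c')).map (ι (n+1)) := by
      intro n c
      rw [Submodule.map_sup, Submodule.map_iSup, hι_i]
      apply le_antisymm
      · refine PS_le _ _ ?_
        rintro ⟨k, c'⟩ ⟨hne, hk⟩
        have hk : k ≤ n := hk
        rcases hk.lt_or_eq with hk | rfl
        · refine le_trans ?_ le_sup_left
          rw [← hL]
          exact range_le_PS mm Ψ hk
        · refine le_trans ?_ le_sup_right
          rw [hΨ]
          have hc : c' ≠ c := by
            rintro rfl
            exact hne rfl
          exact le_iSup (fun c' : {c' // c' ≠ c} =>
            (LinearMap.range (ψ (st k) c')).map (ι (k+1))) ⟨c', hc⟩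
      · refine sup_le ?_ (iSup_le ?_)
        · rw [← hL]
          refine PS_mono _ _ ?_
          intro b (hb : rk b < n)
          refine ⟨?_, hb.le⟩
          rintro rfl
          exact lt_irrefl _ hb
        · rintro ⟨c', hc'⟩
          refine (hΨ n c').ge.trans (range_le_PS mm Ψ ?_)
          refine ⟨?_, le_refl _⟩
          intro h
          apply hc'
          exact eq_of_heq (Sigma.mk.inj h).2
    have hS : ∀ n c, SS rk mm Ψ ⟨n, c⟩ = (LinearMap.range (i (st n)) ⊔ ⨆ c' : {c' // c' ≠ c},
          LinearMap.range (ψ (st n) c')).comap (ψ (st n) c) := by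
      intro n c
      have : SS rk mm Ψ ⟨n, c⟩ = ((PS mm Ψ {b | b ≠ ⟨n, c⟩ ∧ rk b ≤ n}).comap (ι (n+1))).comap
        (ψ (st n) c) := rfl
      rw [this, hQ, Submodule.comap_map_eq_of_injective (hι (n+1))]
    refine hill rk mm Ψ ?_ ?_ ?_
    · rintro ⟨n, c⟩
      rw [hS]
      exact hfg (st n) c
    · rintro ⟨n, c⟩
      rw [hS, hL]
      refine le_trans ?_ (hι_i n).le
      refine (Submodule.map_comp _ _ _).le.trans ?_
      exact Submodule.map_mono (hSS (st n) c)
    · rw [eq_top_iff]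
      intro x _
      obtain ⟨n, y, rfl⟩ := hsurj x
      have h1 : ι n y ∈ PS mm Ψ {b | rk b < n} := by
        rw [hL]
        exact ⟨y, rfl⟩
      exact PS_mono _ _ (Set.subset_univ _) h1

end FpPer

namespace FpPer

universe w

open Abelian

section ExtLemmas

variable {R : Type u} [Ring R] (X₁ X₂ X₃ : ModuleCat.{u} R)
  (f : X₁ →ₗ[R] X₂) (g : X₂ →ₗ[R] X₃)

theorem mkShort (hf : Function.Injective f) (hg : Function.Surjective g)
    (hfg : Function.Exact f g) :
    ∃ h : ModuleCat.ofHom f ≫ ModuleCat.ofHom g = 0,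
      (ShortComplex.mk (ModuleCat.ofHom f) (ModuleCat.ofHom g) h).ShortExact := by
  refine ⟨?_, ?_⟩
  · ext x
    exact hfg.apply_apply_eq_zero x
  · exact ModuleCat.shortComplex_shortExact _ hfg hf hg

variable [HasExt.{w} (ModuleCat.{u} R)]

theorem extend_of_ext (hf : Function.Injective f) (hg : Function.Surjective g)
    (hfg : Function.Exact f g) (J : ModuleCat.{u} R) (hJ : Subsingleton (Ext X₃ J 1))
    (φ : X₁ →ₗ[R] J) : ∃ φ' : X₂ →ₗ[R] J, ∀ x, φ' (f x) = φ x := by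
  obtain ⟨h, hS⟩ := mkShort X₁ X₂ X₃ f g hf hg hfg
  obtain ⟨y, hy⟩ := Ext.contravariant_sequence_exact₁ hS J (Ext.mk₀ (ModuleCat.ofHom φ))
    (n₁ := 1) rfl (Subsingleton.elim _ _)
  obtain ⟨y, rfl⟩ := (Ext.mk₀_bijective X₂ J).2 y
  rw [Ext.mk₀_comp_mk₀] at hy
  have hy := (Ext.mk₀_bijective X₁ J).1 hy
  exact ⟨y.hom, fun x => congrArg (fun f => f.hom x) hy⟩

theorem ext_of_extend (hf : Function.Injective f) (hg : Function.Surjective g)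
    (hfg : Function.Exact f g) (J : ModuleCat.{u} R) (hJ : Subsingleton (Ext X₂ J 1))
    (hφ : ∀ φ : X₁ →ₗ[R] J, ∃ φ' : X₂ →ₗ[R] J, ∀ x, φ' (f x) = φ x) :
    Subsingleton (Ext X₃ J 1) := by
  obtain ⟨h, hS⟩ := mkShort X₁ X₂ X₃ f g hf hg hfg
  refine subsingleton_of_forall_eq 0 fun x => ?_
  obtain ⟨y, rfl⟩ := Ext.contravariant_sequence_exact₃ hS J x (n₀ := 0)
    (Subsingleton.elim _ _) rfl
  obtain ⟨y, rfl⟩ := (Ext.mk₀_bijective X₁ J).2 y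
  obtain ⟨φ', h'⟩ := hφ y.hom
  have : y = ModuleCat.ofHom f ≫ ModuleCat.ofHom φ' := by
    ext x
    exact (h' x).symm
  rw [this, ← Ext.mk₀_comp_mk₀]
  exact hS.extClass_comp_assoc _

theorem lift_of_ext (hf : Function.Injective f) (hg : Function.Surjective g)
    (hfg : Function.Exact f g) (T : ModuleCat.{u} R) (hT : Subsingleton (Ext T X₁ 1))
    (φ : T →ₗ[R] X₃) : ∃ φ' : T →ₗ[R] X₂, ∀ x, g (φ' x) = φ x := by
  obtain ⟨h, hS⟩ := mkShort X₁ X₂ X₃ f g hf hg hfg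
  obtain ⟨y, hy⟩ := Ext.covariant_sequence_exact₃ T hS (Ext.mk₀ (ModuleCat.ofHom φ))
    (n₁ := 1) rfl (Subsingleton.elim _ _)
  obtain ⟨y, rfl⟩ := (Ext.mk₀_bijective T X₂).2 y
  rw [Ext.mk₀_comp_mk₀] at hy
  have hy := (Ext.mk₀_bijective T X₃).1 hy
  exact ⟨y.hom, fun x => congrArg (fun f => f.hom x) hy⟩

theorem ext_cosyz (hf : Function.Injective f) (hg : Function.Surjective g)
    (hfg : Function.Exact f g) (T : ModuleCat.{u} R) (n : ℕ)
    (h₁ : Subsingleton (Ext T X₁ (n + 1))) (h₂ : Subsingleton (Ext T X₂ n)) :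
    Subsingleton (Ext T X₃ n) := by
  obtain ⟨h, hS⟩ := mkShort X₁ X₂ X₃ f g hf hg hfg
  refine subsingleton_of_forall_eq 0 fun x => ?_
  obtain ⟨y, rfl⟩ := Ext.covariant_sequence_exact₃ T hS x rfl (Subsingleton.elim _ _)
  rw [h₂.elim y 0, Ext.zero_comp]

end ExtLemmas

theorem factor_range {R : Type u} [Ring R] {X C E : Type u} [AddCommGroup X] [Module R X]
    [AddCommGroup C] [Module R C] [AddCommGroup E] [Module R E] (j : C →ₗ[R] E)
    (hj : Function.Injective j) (g : X →ₗ[R] E) (h : ∀ x, g x ∈ LinearMap.range j) :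
    ∃ g' : X →ₗ[R] C, ∀ x, j (g' x) = g x := by
  let e := LinearEquiv.ofInjective j hj
  refine ⟨e.symm.toLinearMap ∘ₗ LinearMap.codRestrict (LinearMap.range j) g h, fun x => ?_⟩
  have := e.apply_symm_apply (LinearMap.codRestrict (LinearMap.range j) g h x)
  exact congrArg Subtype.val this

theorem extend_injective {R : Type u} [Ring R] (I : ModuleCat.{u} R) [Injective I]
    {A : ModuleCat.{u} R} (d : A →ₗ[R] A) (v : A →ₗ[R] I) (h : ∀ x, d x = 0 → v x = 0) :
    ∃ v' : A →ₗ[R] I, ∀ x, v x = v' (d x) := by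
  let v₀ : LinearMap.range d →ₗ[R] I :=
    (LinearMap.ker d).liftQ v h ∘ₗ d.quotKerEquivRange.symm.toLinearMap
  have hv₀ : ∀ x, v₀ ⟨d x, ⟨x, rfl⟩⟩ = v x := by
    intro x
    have : d.quotKerEquivRange (Submodule.Quotient.mk x) = ⟨d x, ⟨x, rfl⟩⟩ := rfl
    rw [← this]
    change (LinearMap.ker d).liftQ v h (d.quotKerEquivRange.symm _) = _
    rw [LinearEquiv.symm_apply_apply]
    rfl
  let j : ModuleCat.of R (LinearMap.range d) ⟶ A := ModuleCat.ofHom (LinearMap.range d).subtype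
  have : Mono j := (ModuleCat.mono_iff_injective _).2 (LinearMap.range d).injective_subtype
  refine ⟨(Injective.factorThru (ModuleCat.ofHom v₀) j).hom, fun x => ?_⟩
  have := Injective.comp_factorThru (ModuleCat.ofHom v₀) j
  rw [← hv₀]
  exact (congrArg (fun f => f.hom ⟨d x, ⟨x, rfl⟩⟩) this).symm

section Coresolution

variable {R : Type u} [Ring R] (J : ModuleCat.{u} R)

/-- Embedding into an injective module. -/
noncomputable def em (X : ModuleCat.{u} R) : X →ₗ[R] (Injective.under X : ModuleCat.{u} R) :=
  (Injective.ι X).hom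

theorem em_inj (X : ModuleCat.{u} R) : Function.Injective (em X) :=
  (ModuleCat.mono_iff_injective (Injective.ι X)).1 inferInstance

/-- Iterated cosyzygies. -/
noncomputable def Cs : ℕ → ModuleCat.{u} R
  | 0 => J
  | n + 1 => ModuleCat.of R ((Injective.under (Cs n) : ModuleCat.{u} R) ⧸ LinearMap.range (em (Cs n)))

/-- The terms of the coresolution. -/
noncomputable def Gs : ℕ → ModuleCat.{u} R
  | 0 => ModuleCat.of R PUnit.{u+1}
  | 1 => J
  | n + 2 => Injective.under (Cs J n)

/-- The projection onto the next cosyzygy. -/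
noncomputable def pr (n : ℕ) : (Injective.under (Cs J n) : ModuleCat.{u} R) →ₗ[R] Cs J (n + 1) :=
  (LinearMap.range (em (Cs J n))).mkQ

theorem pr_surj (n : ℕ) : Function.Surjective (pr J n) :=
  Submodule.mkQ_surjective _

theorem pr_exact (n : ℕ) : Function.Exact (em (Cs J n)) (pr J n) :=
  LinearMap.exact_iff.2 (Submodule.ker_mkQ _)

/-- The differential. -/
noncomputable def dl : ∀ n, Gs J n →ₗ[R] Gs J (n + 1)
  | 0 => 0
  | 1 => em J
  | n + 2 => em (Cs J (n + 1)) ∘ₗ pr J n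

theorem dl_dl : ∀ n x, dl J (n + 1) (dl J n x) = 0
  | 0, x => map_zero (em J)
  | 1, x => by
    change em (Cs J 1) (pr J 0 (em (Cs J 0) x)) = 0
    exact (congrArg (em (Cs J 1)) ((pr_exact J 0).apply_apply_eq_zero x)).trans (map_zero _)
  | n + 2, x => by
    change em (Cs J (n + 2)) (pr J (n + 1) (em (Cs J (n + 1)) (pr J n x))) = 0
    rw [(pr_exact J (n + 1)).apply_apply_eq_zero, map_zero]

variable [HasExt.{w} (ModuleCat.{u} R)]

theorem ext_inj (T I : ModuleCat.{u} R) [Injective I] (n : ℕ) :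
    Subsingleton (Ext T I (n + 1)) :=
  subsingleton_of_forall_eq 0 fun _ => Ext.eq_zero_of_injective _

theorem ext_proj (T I : ModuleCat.{u} R) [Projective T] (n : ℕ) :
    Subsingleton (Ext T I (n + 1)) :=
  subsingleton_of_forall_eq 0 fun _ => Ext.eq_zero_of_projective _

theorem Cs_sfi (hJ : ∀ T : ModuleCat.{u} R, Module.FinitePresentation R T →
    ∀ n : ℕ, Subsingleton (Ext T J (n + 1))) (k : ℕ) :
    ∀ T : ModuleCat.{u} R, Module.FinitePresentation R T →
      ∀ n : ℕ, Subsingleton (Ext T (Cs J k) (n + 1)) := by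
  induction k with
  | zero => exact hJ
  | succ k ih =>
    intro T hT n
    exact ext_cosyz _ _ _ (em (Cs J k)) (pr J k) (em_inj _) (pr_surj J k) (pr_exact J k) T (n + 1)
      (ih T hT (n + 1)) (ext_inj _ _ _)

theorem Gs_fi (hJ : ∀ T : ModuleCat.{u} R, Module.FinitePresentation R T →
    ∀ n : ℕ, Subsingleton (Ext T J (n + 1))) :
    ∀ (k : ℕ) (T : ModuleCat.{u} R), Module.FinitePresentation R T →
      Subsingleton (Ext T (Gs J k) 1)
  | 0, T, _ => by
    have : Injective (Gs J 0) :=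
      (ModuleCat.isZero_of_subsingleton (ModuleCat.of R PUnit.{u+1})).injective
    exact ext_inj T (Gs J 0) 0
  | 1, T, hT => hJ T hT 0
  | n + 2, T, _ => by
    have : Injective (Gs J (n + 2)) := inferInstanceAs (Injective (Injective.under (Cs J n)))
    exact ext_inj T (Gs J (n + 2)) 0

theorem Gs_LP (hJ : ∀ T : ModuleCat.{u} R, Module.FinitePresentation R T →
    ∀ n : ℕ, Subsingleton (Ext T J (n + 1))) :
    ∀ (n : ℕ) (X : Type u) [AddCommGroup X] [Module R X], Module.FinitePresentation R X →
      ∀ g : X →ₗ[R] Gs J (n + 1), (∀ x, dl J (n + 1) (g x) = 0) →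
        ∃ h : X →ₗ[R] Gs J n, ∀ x, dl J n (h x) = g x
  | 0, X, _, _, _, g, hg => by
    refine ⟨0, fun x => ?_⟩
    have h1 : g x = 0 := em_inj J ((hg x).trans (map_zero (em J)).symm)
    rw [h1]
    exact map_zero _
  | 1, X, _, _, _, g, hg => by
    refine factor_range (em J) (em_inj J) g fun x => ?_
    have h1 : pr J 0 (g x) = 0 := em_inj _ ((hg x).trans (map_zero (em (Cs J 1))).symm)
    exact (pr_exact J 0 (g x)).1 h1
  | n + 2, X, _, _, hX, g, hg => by
    obtain ⟨g', hg'⟩ := factor_range (em (Cs J (n + 1))) (em_inj _) g (fun x => by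
      have h1 : pr J (n + 1) (g x) = 0 :=
        em_inj _ ((hg x).trans (map_zero (em (Cs J (n + 2)))).symm)
      exact (pr_exact J (n + 1) (g x)).1 h1)
    obtain ⟨h, hh⟩ := lift_of_ext _ _ _ (em (Cs J n)) (pr J n) (em_inj _) (pr_surj J n)
      (pr_exact J n) (ModuleCat.of R X) (Cs_sfi J hJ n _ hX 0) g'
    refine ⟨h, fun x => ?_⟩
    exact (congrArg (em (Cs J (n + 1))) (hh x)).trans (hg' x)

theorem Gs_EP (hJ : ∀ T : ModuleCat.{u} R, Module.FinitePresentation R T →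
    ∀ n : ℕ, Subsingleton (Ext T J (n + 1))) (P : ModuleCat.{u} R) (n : ℕ)
    (B B' : Submodule R P) (hle : B ≤ B')
    (hfp : Module.FinitePresentation R (B' ⧸ B.submoduleOf B')) (g : B →ₗ[R] Gs J n) :
    ∃ g' : B' →ₗ[R] Gs J n, ∀ x (hx : x ∈ B), g' ⟨x, hle hx⟩ = g ⟨x, hx⟩ := by
  obtain ⟨g', h⟩ := extend_of_ext (ModuleCat.of R B) (ModuleCat.of R B')
    (ModuleCat.of R (B' ⧸ B.submoduleOf B')) (Submodule.inclusion hle) (B.submoduleOf B').mkQ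
    (Submodule.inclusion_injective hle) (Submodule.mkQ_surjective _) (by
      intro y
      refine (Submodule.Quotient.mk_eq_zero _).trans ?_
      constructor
      · intro hy
        exact ⟨⟨y.1, hy⟩, rfl⟩
      · rintro ⟨x, rfl⟩
        exact x.2) (Gs J n) (Gs_fi J hJ n _ hfp) g
  exact ⟨g', fun x hx => h ⟨x, hx⟩⟩

theorem Gs_maps (A : ModuleCat.{u} R) (d : A →ₗ[R] A) (hd : Function.Exact d d)
    (φ : A →ₗ[R] J) (hφ : ∀ x, φ (d x) = 0) :
    ∃ f : ∀ n, A →ₗ[R] Gs J (n + 1), f 0 = φ ∧ ∀ n x, dl J (n + 1) (f n x) = f (n + 1) (d x) := by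
  have step : ∀ n (f : {f : A →ₗ[R] Gs J (n + 1) // ∀ x, dl J (n + 1) (f (d x)) = 0}),
      ∃ f' : {f : A →ₗ[R] Gs J (n + 2) // ∀ x, dl J (n + 2) (f (d x)) = 0},
        ∀ x, dl J (n + 1) (f.1 x) = f'.1 (d x) := by
    rintro n ⟨f, hf⟩
    have : Injective (Gs J (n + 2)) := inferInstanceAs (Injective (Injective.under (Cs J n)))
    obtain ⟨f', hf'⟩ := extend_injective (Gs J (n + 2)) d (dl J (n + 1) ∘ₗ f) (by
      intro x hx
      obtain ⟨y, rfl⟩ := (hd x).1 hx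
      exact hf y)
    refine ⟨⟨f', fun x => ?_⟩, hf'⟩
    rw [← hf']
    exact dl_dl J (n + 1) _
  choose nx hnx using step
  let F : ∀ n, {f : A →ₗ[R] Gs J (n + 1) // ∀ x, dl J (n + 1) (f (d x)) = 0} := fun n =>
    Nat.rec ⟨φ, fun x => (congrArg (em J) (hφ x)).trans (map_zero (em J))⟩ (fun n f => nx n f) n
  exact ⟨fun n => (F n).1, rfl, fun n x => hnx n (F n) x⟩

end Coresolution

end FpPer

namespace FpPer

open Abelian

universe w

variable {R : Type u} [Ring R] [HasExt.{w} (ModuleCat.{u} R)]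

theorem fi_of_rlp (K : ModuleCat.{u} R)
    (hK : ∀ (k : ℕ) (S : Submodule R (Fin k → R)), S.FG → ∀ (φ : S →ₗ[R] K),
        ∃ g : (Fin k → R) →ₗ[R] K, ∀ s : S, g s = φ s)
    (T : ModuleCat.{u} R) (hT : Module.FinitePresentation R T) : Subsingleton (Ext T K 1) := by
  obtain ⟨k, S, e, hS⟩ := Module.FinitePresentation.exists_fin R T
  have : Projective (ModuleCat.of R (Fin k → R)) := inferInstance
  refine ext_of_extend (ModuleCat.of R S) (ModuleCat.of R (Fin k → R)) T S.subtype
    (e.symm.toLinearMap ∘ₗ S.mkQ) S.injective_subtype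
    (e.symm.surjective.comp S.mkQ_surjective) ?_ K (ext_proj _ _ 0) (hK k S hS)
  intro y
  have h1 : e.symm (S.mkQ y) = 0 ↔ y ∈ S := by
    rw [map_eq_zero_iff _ e.symm.injective]
    exact Submodule.Quotient.mk_eq_zero _
  refine h1.trans ?_
  constructor
  · intro hy
    exact ⟨⟨y, hy⟩, rfl⟩
  · rintro ⟨x, rfl⟩
    exact x.2

theorem exact_case (A : ModuleCat.{u} R)
    (hA : ∀ K : ModuleCat.{u} R, (∀ T : ModuleCat.{u} R, Module.FinitePresentation R T →
      Subsingleton (Ext T K 1)) → Subsingleton (Ext A K 1))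
    (d : A →ₗ[R] A) (hd : Function.Exact d d) (J : ModuleCat.{u} R)
    (hJ : ∀ T : ModuleCat.{u} R, Module.FinitePresentation R T →
      ∀ n : ℕ, Subsingleton (Ext T J (n + 1)))
    (φ : A →ₗ[R] J) (hφ : ∀ x, φ (d x) = 0) :
    ∃ h : A →ₗ[R] J, ∀ x, φ x = h (d x) := by
  obtain ⟨P, π, hrlp, H, hsup, hext⟩ := tower A
  have hsurj : Function.Surjective π := by
    intro a
    obtain ⟨g, -, hg⟩ := hrlp 1 ⊥ Submodule.fg_bot 0
      (LinearMap.toSpanSingleton R A a ∘ₗ LinearMap.proj 0) (by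
        rintro ⟨s, hs⟩
        have hs : s = 0 := (Submodule.mem_bot R).1 hs
        subst hs
        simp)
    refine ⟨g (fun _ => 1), ?_⟩
    rw [hg]
    simp
  have hK : Subsingleton (Ext A (ModuleCat.of R (LinearMap.ker π)) 1) := by
    refine hA _ (fi_of_rlp _ ?_)
    intro k S hS φ
    obtain ⟨g, hg, hg'⟩ := hrlp k S hS ((LinearMap.ker π).subtype ∘ₗ φ) 0 (by
      intro s
      exact (φ s).2.symm)
    refine ⟨LinearMap.codRestrict (LinearMap.ker π) g (fun v => hg' v), ?_⟩
    intro s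
    exact Subtype.ext (hg s)
  obtain ⟨ι, hι⟩ := lift_of_ext (ModuleCat.of R (LinearMap.ker π)) P A (LinearMap.ker π).subtype π
    (LinearMap.ker π).injective_subtype hsurj (LinearMap.exact_subtype_ker_map π) A hK LinearMap.id
  have hι : ∀ x, π (ι x) = x := hι
  obtain ⟨f, hf0, hf⟩ := Gs_maps J A d hd φ hφ
  obtain ⟨h, hh⟩ := nullHomotopic (G := fun n => Gs J n) (ι ∘ₗ d ∘ₗ π) (by
      intro x
      change ι (d (π (ι (d (π x))))) = 0
      rw [hι, hd.apply_apply_eq_zero, map_zero]) (dl J) (dl_dl J) (Gs_LP J hJ) (Gs_EP J hJ P)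
      (fun n => f n ∘ₗ π) (by
        intro n x
        change dl J (n + 1) (f n (π x)) = f (n + 1) (π (ι (d (π x))))
        rw [hι, hf]) H hsup hext
  refine ⟨h 1 ∘ₗ ι, fun x => ?_⟩
  have h1 := hh 0 (ι x)
  have h2 : f 0 (π (ι x)) = 0 + h 1 (ι (d (π (ι x)))) := h1
  rw [hι, hf0] at h2
  exact h2.trans (zero_add _)

end FpPer

namespace Stmt0

/-- Any `FpProj`-periodic right `R`-module is weakly fp-projective. -/
theorem fpProjPeriodic_weaklyFpProjective {R : Type u} [Ring R] (M : RightMod R)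
    (h : ∃ (A : RightMod R) (_ : FpProjective R A) (f : M ⟶ A) (g : A ⟶ M)
      (zero : f ≫ g = 0), (ShortComplex.mk f g zero).ShortExact) :
    WeaklyFpProjective R M := by
  obtain ⟨A, hA, f, g, zero, hS⟩ := h
  intro J hJ
  have hf : Function.Injective f.hom := hS.moduleCat_injective_f
  have hg : Function.Surjective g.hom := hS.moduleCat_surjective_g
  have hfg : Function.Exact f.hom g.hom :=
    (ShortComplex.ShortExact.moduleCat_exact_iff_function_exact _).1 hS.exact
  have hd : Function.Exact (f.hom ∘ₗ g.hom) (f.hom ∘ₗ g.hom) := by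
    intro x
    constructor
    · intro hx
      have hx : f.hom (g.hom x) = 0 := hx
      have hx' : g.hom x = 0 := hf (hx.trans (map_zero f.hom).symm)
      obtain ⟨y, rfl⟩ := (hfg x).1 hx'
      obtain ⟨z, rfl⟩ := hg y
      exact ⟨z, rfl⟩
    · rintro ⟨y, rfl⟩
      change f.hom (g.hom (f.hom (g.hom y))) = 0
      rw [hfg.apply_apply_eq_zero, map_zero]
  have hA' : Subsingleton (Abelian.Ext A J 1) := hA J (fun T hT => hJ T hT 1 (le_refl 1))
  refine FpPer.ext_of_extend M A M f.hom g.hom hf hg hfg J hA' ?_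
  intro φ
  obtain ⟨h, hh⟩ := FpPer.exact_case A hA (f.hom ∘ₗ g.hom) hd J
    (fun T hT n => hJ T hT (n + 1) (Nat.le_add_left 1 n)) (φ ∘ₗ g.hom) (by
      intro x
      change φ (g.hom (f.hom (g.hom x))) = 0
      rw [hfg.apply_apply_eq_zero, map_zero])
  refine ⟨h, fun x => ?_⟩
  obtain ⟨y, rfl⟩ := hg x
  exact (hh y).symm

end Stmt0
end

section
/- Let R be an associative ring and let P^• be an (unbounded) acyclic complex of right R-modules all of whose terms P^n are fp-projective. Then every module of cocycles Z^n = ker(P^n → P^{n+1}) of the complex P^• is weakly fp-projective. -/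
/-!
STATEMENT 1: Let R be an associative ring and let P^• be an (unbounded) acyclic
complex of right R-modules all of whose terms are fp-projective. Then every
module of cocycles Z^n = ker(P^n → P^{n+1}) is weakly fp-projective.

Right `R`-modules are formalized as modules over the opposite ring `Rᵐᵒᵖ`.
-/

open CategoryTheory Limits

universe u

namespace Stmt1

variable (R : Type u) [Ring R]

/-- The category of right `R`-modules. -/
abbrev RightMod := ModuleCat.{u} Rᵐᵒᵖ

instance : HasExt.{u + 1} (RightMod R) := by
  letI := HasDerivedCategory.standard (RightMod R)
  exact hasExt_of_hasDerivedCategory _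

/-- A right `R`-module `J` is fp-injective if `Ext¹(T, J) = 0` for every
finitely presented right `R`-module `T`. -/
def FpInjective (J : RightMod R) : Prop :=
  ∀ T : RightMod R, Module.FinitePresentation Rᵐᵒᵖ T →
    Subsingleton (Abelian.Ext T J 1)

/-- A right `R`-module `J` is strongly fp-injective if `Extⁿ(T, J) = 0` for
every finitely presented right `R`-module `T` and every `n ≥ 1`. -/
def StronglyFpInjective (J : RightMod R) : Prop :=
  ∀ T : RightMod R, Module.FinitePresentation Rᵐᵒᵖ T →
    ∀ n : ℕ, 1 ≤ n → Subsingleton (Abelian.Ext T J n)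

/-- A right `R`-module `P` is fp-projective if `Ext¹(P, J) = 0` for every
fp-injective right `R`-module `J`. -/
def FpProjective (P : RightMod R) : Prop :=
  ∀ J : RightMod R, FpInjective R J → Subsingleton (Abelian.Ext P J 1)

/-- A right `R`-module `P` is weakly fp-projective if `Ext¹(P, J) = 0` for
every strongly fp-injective right `R`-module `J`. -/
def WeaklyFpProjective (P : RightMod R) : Prop :=
  ∀ J : RightMod R, StronglyFpInjective R J → Subsingleton (Abelian.Ext P J 1)


section Hill
variable {A : Type u} [Ring A]

/-- The quotient `V / U` is finitely presented. -/
def RelFP {M : Type u} [AddCommGroup M] [Module A M] (U V : Submodule A M) : Prop :=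
  Module.FinitePresentation A (V ⧸ U.submoduleOf V)

lemma RelFP.trans {M : Type u} [AddCommGroup M] [Module A M] {U V W : Submodule A M}
    (hUV : U ≤ V) (hVW : V ≤ W) (h₁ : RelFP U V) (h₂ : RelFP V W) : RelFP U W := by
  unfold RelFP at *
  have hle : U.submoduleOf W ≤ V.submoduleOf W := fun x hx => hUV hx
  let l : (W ⧸ U.submoduleOf W) →ₗ[A] (W ⧸ V.submoduleOf W) := Submodule.factor hle
  have hl : Function.Surjective l := Submodule.factor_surjective hle
  let k : (V ⧸ U.submoduleOf V) →ₗ[A] (W ⧸ U.submoduleOf W) :=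
    Submodule.mapQ _ _ (Submodule.inclusion hVW) (fun x hx => hx)
  have hk : ∀ x, k x ∈ LinearMap.ker l := by
    intro x
    induction x using Submodule.Quotient.induction_on with
    | H x =>
      change Submodule.Quotient.mk (Submodule.inclusion hVW x) = (0 : W ⧸ V.submoduleOf W)
      rw [Submodule.Quotient.mk_eq_zero]
      exact x.2
  have : Module.FinitePresentation A (LinearMap.ker l) := by
    apply Module.finitePresentation_of_surjective (k.codRestrict _ hk)
    · rintro ⟨y, hy⟩
      induction y using Submodule.Quotient.induction_on with
      | H y =>
        have hy' : (Submodule.Quotient.mk y : W ⧸ V.submoduleOf W) = 0 := hy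
        rw [Submodule.Quotient.mk_eq_zero] at hy'
        exact ⟨Submodule.Quotient.mk ⟨y.1, hy'⟩, Subtype.ext rfl⟩
    · have : LinearMap.ker (k.codRestrict _ hk) = ⊥ := by
        rw [LinearMap.ker_codRestrict, LinearMap.ker_eq_bot']
        intro x hx
        induction x using Submodule.Quotient.induction_on with
        | H x =>
          have hx' : (Submodule.Quotient.mk (Submodule.inclusion hVW x) :
            W ⧸ U.submoduleOf W) = 0 := hx
          rw [Submodule.Quotient.mk_eq_zero] at hx' ⊢
          exact hx'
      rw [this]; exact Submodule.fg_bot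
  exact Module.finitePresentation_of_ker l hl

lemma RelFP.refl {M : Type u} [AddCommGroup M] [Module A M] (U : Submodule A M) : RelFP U U := by
  unfold RelFP
  have : Subsingleton (U ⧸ U.submoduleOf U) := by
    refine ⟨fun x y => ?_⟩
    induction x using Submodule.Quotient.induction_on with
    | H x =>
      induction y using Submodule.Quotient.induction_on with
      | H y =>
        rw [Submodule.Quotient.eq]
        exact (x - y).2
  infer_instance

lemma RelFP.step {M : Type u} [AddCommGroup M] [Module A M] (U V : Submodule A M) {n : ℕ}
    (g : (Fin n → A) →ₗ[A] M) (hV : V = U ⊔ LinearMap.range g) (hg : (U.comap g).FG) :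
    RelFP U V := by
  unfold RelFP
  have hr : ∀ x, g x ∈ V := fun x => hV ▸ Submodule.mem_sup_right ⟨x, rfl⟩
  apply Module.finitePresentation_of_free_of_surjective
    ((U.submoduleOf V).mkQ ∘ₗ g.codRestrict V hr)
  · intro y
    induction y using Submodule.Quotient.induction_on with
    | H y =>
      obtain ⟨y, hy⟩ := y
      have hy' := hy
      rw [hV, Submodule.mem_sup] at hy'
      obtain ⟨a, ha, _, ⟨x, rfl⟩, rfl⟩ := hy'
      refine ⟨x, ?_⟩
      change Submodule.Quotient.mk _ = _
      rw [eq_comm, Submodule.Quotient.eq]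
      change (a + g x) - g x ∈ U
      simpa using ha
  · have : LinearMap.ker ((U.submoduleOf V).mkQ ∘ₗ g.codRestrict V hr) = U.comap g := by
      ext x
      rw [LinearMap.mem_ker]
      change Submodule.Quotient.mk _ = _ ↔ _
      rw [Submodule.Quotient.mk_eq_zero]
      exact Iff.rfl
    rw [this]; exact hg

/-- A filtration of `F` with finitely presented subquotients, in the form used in the Hill lemma. -/
structure HillFam (A : Type u) [Ring A] (F : Type u) [AddCommGroup F] [Module A F] where
  I : Type u
  ord : LinearOrder I
  wf : WellFoundedLT I
  n : I → ℕ
  g : ∀ a, (Fin (n a) → A) →ₗ[A] F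
  fg : ∀ a, ((⨆ b, ⨆ (_ : b < a), LinearMap.range (g b)).comap (g a)).FG
  top : ⨆ a, LinearMap.range (g a) = ⊤

attribute [instance] HillFam.ord HillFam.wf

namespace HillFam
variable {F : Type u} [AddCommGroup F] [Module A F] (H : HillFam A F)

/-- the submodule spanned by cells in `S` -/
def M (S : Set H.I) : Submodule A F := ⨆ b, ⨆ (_ : b ∈ S), LinearMap.range (H.g b)

lemma M_mono {S T : Set H.I} (h : S ⊆ T) : H.M S ≤ H.M T :=
  iSup₂_le fun b hb => le_iSup₂_of_le b (h hb) le_rfl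

lemma range_le {S : Set H.I} {b : H.I} (h : b ∈ S) : LinearMap.range (H.g b) ≤ H.M S :=
  le_iSup₂_of_le b h le_rfl

lemma M_le {S : Set H.I} {N : Submodule A F} : H.M S ≤ N ↔ ∀ b ∈ S, LinearMap.range (H.g b) ≤ N :=
  iSup₂_le_iff

lemma M_union (S T : Set H.I) : H.M (S ∪ T) = H.M S ⊔ H.M T := by
  apply le_antisymm
  · rw [M_le]
    rintro b (hb | hb)
    · exact (H.range_le hb).trans le_sup_left
    · exact (H.range_le hb).trans le_sup_right
  · exact sup_le (H.M_mono Set.subset_union_left) (H.M_mono Set.subset_union_right)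

lemma M_univ : H.M Set.univ = ⊤ := by
  rw [← H.top]; simp [M]

/-- closed subsets -/
def Closed (S : Set H.I) : Prop :=
  ∀ a ∈ S, LinearMap.range (H.g a) ⊓ H.M (Set.Iio a) ≤ H.M (S ∩ Set.Iio a)

lemma fg' (a : H.I) : ((H.M (Set.Iio a)).comap (H.g a)).FG := H.fg a

lemma closed_sUnion {C : Set (Set H.I)} (h : ∀ S ∈ C, H.Closed S) : H.Closed (⋃₀ C) := by
  rintro a ⟨S, hS, ha⟩
  exact (h S hS a ha).trans (H.M_mono (Set.inter_subset_inter_left _ (Set.subset_sUnion_of_mem hS)))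

lemma closed_union {S T : Set H.I} (hS : H.Closed S) (hT : H.Closed T) : H.Closed (S ∪ T) := by
  rintro a (ha | ha)
  · exact (hS a ha).trans (H.M_mono (Set.inter_subset_inter_left _ Set.subset_union_left))
  · exact (hT a ha).trans (H.M_mono (Set.inter_subset_inter_left _ Set.subset_union_right))

lemma closed_empty : H.Closed ∅ := fun _ ha => ha.elim

lemma M_finite_fg {S : Set H.I} (hS : S.Finite) : (H.M S).FG := by
  have : H.M S = ⨆ b ∈ hS.toFinset, LinearMap.range (H.g b) := by simp [M]
  rw [this]
  exact Submodule.fg_biSup _ _ (fun b _ => Submodule.FG.of_finite)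

lemma exists_finite_of_fg {N : Submodule A F} (hN : N.FG) {S : Set H.I} (h : N ≤ H.M S) :
    ∃ t : Set H.I, t.Finite ∧ t ⊆ S ∧ N ≤ H.M t := by
  classical
  rw [Submodule.fg_iff_compact] at hN
  have h' : N ≤ ⨆ b : S, LinearMap.range (H.g b.1) := by
    rw [M, iSup_subtype'] at h; exact h
  obtain ⟨s, hs⟩ := CompleteLattice.IsCompactElement.exists_finset_of_le_iSup _ hN _ h'
  refine ⟨Set.image Subtype.val (s : Set S), s.finite_toSet.image _, by rintro _ ⟨x, _, rfl⟩; exact x.2, ?_⟩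
  refine hs.trans (iSup₂_le fun b hb => H.range_le ⟨b, hb, rfl⟩)

lemma exists_finite_closed (a : H.I) : ∃ S : Set H.I, S.Finite ∧ a ∈ S ∧ H.Closed S := by
  induction a using WellFoundedLT.induction with
  | ind a ih =>
    have h1 : (LinearMap.range (H.g a) ⊓ H.M (Set.Iio a)).FG := by
      rw [← Submodule.map_comap_eq]
      exact (H.fg' a).map _
    obtain ⟨t, htf, hts, ht⟩ := H.exists_finite_of_fg h1 inf_le_right
    choose! S hSf hS hSc using ih
    refine ⟨{a} ∪ ⋃ b ∈ t, S b, (Set.finite_singleton a).union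
      (htf.biUnion fun b hb => hSf b (hts hb)), Or.inl rfl, ?_⟩
    rintro c (rfl | hc)
    · refine ht.trans (H.M_mono fun b hb => ⟨Or.inr ?_, hts hb⟩)
      exact Set.mem_biUnion hb (hS b (hts hb))
    · rw [Set.mem_iUnion₂] at hc
      obtain ⟨b, hb, hc⟩ := hc
      refine (hSc b (hts hb) c hc).trans (H.M_mono (Set.inter_subset_inter_left _ ?_))
      exact (Set.subset_biUnion_of_mem (u := S) hb).trans Set.subset_union_right

lemma exists_finite_closed_of_fg {N : Submodule A F} (hN : N.FG) :
    ∃ S : Set H.I, S.Finite ∧ H.Closed S ∧ N ≤ H.M S := by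
  obtain ⟨t, htf, -, ht⟩ := H.exists_finite_of_fg hN (S := Set.univ) (by simp [M_univ])
  choose S hSf hS hSc using H.exists_finite_closed
  refine ⟨⋃ b ∈ t, S b, htf.biUnion fun b _ => hSf b, ?_, ht.trans (H.M_mono fun b hb =>
    Set.mem_biUnion hb (hS b))⟩
  rw [← Set.sUnion_image]
  apply H.closed_sUnion
  rintro _ ⟨b, _, rfl⟩
  exact hSc b

lemma M_Iio_mem {U : Set H.I} {c : H.I} {x : F} (hx : x ∈ H.M (U ∩ Set.Iio c)) :
    x = 0 ∨ ∃ b < c, x ∈ H.M (U ∩ Set.Iic b) := by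
  obtain ⟨t, htf, hts, ht⟩ := H.exists_finite_of_fg (Submodule.fg_span_singleton x)
    ((Submodule.span_singleton_le_iff_mem _ _).2 hx)
  rw [Submodule.span_singleton_le_iff_mem] at ht
  rcases t.eq_empty_or_nonempty with rfl | hne
  · left; simpa [M] using ht
  · right
    obtain ⟨b, hb, hmax⟩ := Set.exists_max_image t id htf hne
    exact ⟨b, (hts hb).2, H.M_mono (T := U ∩ Set.Iic b) (fun y hy => ⟨(hts hy).1, hmax y hy⟩) ht⟩

lemma mem_of_closed {U : Set H.I} (hU : H.Closed U) (a : H.I) (c : H.I) :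
    ∀ x ∈ H.M (U ∩ Set.Iic c), x ∈ H.M (Set.Iic a) → x ∈ H.M (U ∩ Set.Iic a) := by
  induction c using WellFoundedLT.induction with
  | ind c ih =>
    intro x hx hxa
    rcases le_or_gt c a with hca | hca
    · exact H.M_mono (Set.inter_subset_inter_right _ (Set.Iic_subset_Iic.2 hca)) hx
    have key : x ∈ H.M (U ∩ Set.Iio c) := by
      by_cases hcU : c ∈ U
      · have : U ∩ Set.Iic c = {c} ∪ (U ∩ Set.Iio c) := by
          ext y; simp only [Set.mem_inter_iff, Set.mem_Iic, Set.mem_union, Set.mem_singleton_iff,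
            Set.mem_Iio, le_iff_eq_or_lt]
          constructor
          · rintro ⟨h, rfl | h'⟩ <;> tauto
          · rintro (rfl | h) <;> tauto
        rw [this, M_union, Submodule.mem_sup] at hx
        obtain ⟨y, hy, z, hz, rfl⟩ := hx
        refine add_mem (hU c hcU ⟨by simpa [M] using hy, ?_⟩) hz
        have h1 : y + z ∈ H.M (Set.Iio c) := H.M_mono (fun b hb => lt_of_le_of_lt hb hca) hxa
        have h2 : z ∈ H.M (Set.Iio c) := H.M_mono Set.inter_subset_right hz
        simpa using sub_mem h1 h2
      · refine H.M_mono ?_ hx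
        rintro y ⟨hy, hyc⟩
        exact ⟨hy, lt_of_le_of_ne hyc (by rintro rfl; exact hcU hy)⟩
    rcases H.M_Iio_mem key with rfl | ⟨b, hb, hxb⟩
    · exact zero_mem _
    · exact ih b hb x hxb hxa

lemma inf_le_of_closed {U : Set H.I} (hU : H.Closed U) {a : H.I} (ha : a ∉ U) :
    LinearMap.range (H.g a) ⊓ H.M U ≤ H.M (Set.Iio a) := by
  rintro x ⟨hxa, hxU⟩
  have hxa' : x ∈ H.M (Set.Iic a) := H.range_le (Set.mem_Iic.2 le_rfl) hxa
  obtain ⟨t, htf, hts, ht⟩ := H.exists_finite_of_fg (Submodule.fg_span_singleton x)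
    ((Submodule.span_singleton_le_iff_mem _ _).2 hxU)
  rw [Submodule.span_singleton_le_iff_mem] at ht
  rcases t.eq_empty_or_nonempty with rfl | hne
  · have : x = 0 := by simpa [M] using ht
    rw [this]; exact zero_mem _
  · obtain ⟨b, hb, hmax⟩ := Set.exists_max_image t id htf hne
    have := H.mem_of_closed hU a b x (H.M_mono (T := U ∩ Set.Iic b) (fun y hy => ⟨hts hy, hmax y hy⟩) ht) hxa'
    refine H.M_mono ?_ this
    rintro y ⟨hy, hya⟩
    exact lt_of_le_of_ne hya (by rintro rfl; exact ha hy)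

lemma relFP_insert {U : Set H.I} (hU : H.Closed U) {a : H.I}
    (ha : LinearMap.range (H.g a) ⊓ H.M (Set.Iio a) ≤ H.M U) :
    RelFP (H.M U) (H.M (U ∪ {a})) := by
  by_cases haU : a ∈ U
  · have : U ∪ {a} = U := by simpa using haU
    rw [this]; exact RelFP.refl _
  · apply RelFP.step _ _ (H.g a)
    · rw [M_union]; simp [M]
    · convert H.fg' a using 1
      ext x
      constructor
      · intro hx
        exact H.inf_le_of_closed hU haU ⟨⟨x, rfl⟩, hx⟩
      · intro hx
        exact ha ⟨⟨x, rfl⟩, hx⟩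

lemma relFP_union {S : Set H.I} (hS : H.Closed S) (k : ℕ) : ∀ {T : Set H.I}, T.Finite →
    T.ncard = k → H.Closed T → RelFP (H.M S) (H.M (S ∪ T)) := by
  induction k with
  | zero =>
    intro T hTf hk hT
    rw [Set.ncard_eq_zero hTf] at hk
    subst hk
    simpa using RelFP.refl (H.M S)
  | succ k ih =>
    intro T hTf hk hT
    have hne : T.Nonempty := by
      rw [← Set.ncard_pos hTf]; omega
    obtain ⟨b, hb, hmax⟩ := Set.exists_max_image T id hTf hne
    have hT' : T \ {b} = T ∩ Set.Iio b := by
      ext y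
      constructor
      · rintro ⟨hy, hyb⟩
        exact ⟨hy, lt_of_le_of_ne (hmax y hy) hyb⟩
      · rintro ⟨hy, hyb⟩
        exact ⟨hy, ne_of_lt hyb⟩
    have hcl : H.Closed (T \ {b}) := by
      rintro a ⟨ha, hab⟩
      refine (hT a ha).trans (H.M_mono ?_)
      rintro y ⟨hy, hya⟩
      refine ⟨⟨hy, ?_⟩, hya⟩
      rintro rfl
      exact absurd (hmax a ha) (not_le.2 hya)
    have h1 := ih (hTf.sdiff (t := {b})) (by rw [Set.ncard_sdiff_singleton_of_mem hb]; omega) hcl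
    have h2 := H.relFP_insert (H.closed_union hS hcl) (a := b)
      ((hT b hb).trans (H.M_mono (by rw [← hT']; exact Set.subset_union_right)))
    have h3 : S ∪ T \ {b} ∪ {b} = S ∪ T := by
      rw [Set.union_assoc, Set.sdiff_union_self, Set.union_eq_self_of_subset_right (s := T)
        (t := {b}) (by simpa using hb)]
    rw [h3] at h2
    exact RelFP.trans (H.M_mono Set.subset_union_left)
      (H.M_mono (Set.union_subset_union_right _ Set.sdiff_subset)) h1 h2

end HillFam
end Hill


section Homotopy
variable {A : Type u} [Ring A]

/-- A pure acyclic complex of fp-injectives, in elementary terms. -/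
structure Target (A : Type u) [Ring A] where
  X : ℕ → Type u
  [acg : ∀ i, AddCommGroup (X i)]
  [mod : ∀ i, Module A (X i)]
  D : ∀ i, X i →ₗ[A] X (i + 1)
  DD : ∀ i x, D (i + 1) (D i x) = 0
  ext : ∀ (i : ℕ) (B : Type u) [AddCommGroup B] [Module A B] (N : Submodule A B),
    Module.FinitePresentation A (B ⧸ N) → ∀ φ : N →ₗ[A] X i,
      ∃ ψ : B →ₗ[A] X i, ∀ x : N, ψ x = φ x
  lift : ∀ (i : ℕ) (T : Type u) [AddCommGroup T] [Module A T], Module.FinitePresentation A T →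
    ∀ v : T →ₗ[A] X (i + 1), (∀ x, D (i + 1) (v x) = 0) →
      ∃ w : T →ₗ[A] X i, ∀ x, D i (w x) = v x

attribute [instance] Target.acg Target.mod

lemma Target.lift' (X : Target A) (i : ℕ) {B : Type u} [AddCommGroup B] [Module A B]
    (N : Submodule A B) (hN : Module.FinitePresentation A (B ⧸ N)) (v : B →ₗ[A] X.X (i + 1))
    (hv : ∀ x, X.D (i + 1) (v x) = 0) (hvN : ∀ x ∈ N, v x = 0) :
    ∃ w : B →ₗ[A] X.X i, (∀ x, X.D i (w x) = v x) ∧ ∀ x ∈ N, w x = 0 := by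
  obtain ⟨w, hw⟩ := X.lift i (B ⧸ N) hN (N.liftQ v hvN) (by
    intro x
    induction x using Submodule.Quotient.induction_on with
    | H x => exact hv x)
  refine ⟨w ∘ₗ N.mkQ, fun x => hw (N.mkQ x), fun x hx => ?_⟩
  have : N.mkQ x = 0 := by simpa using hx
  simp [this]

lemma null_rel (X : Target A) (B : ℕ → Type u) [∀ i, AddCommGroup (B i)] [∀ i, Module A (B i)]
    (d : ∀ i, B i →ₗ[A] B (i + 1)) (dd : ∀ i x, d (i + 1) (d i x) = 0)
    (U : ∀ i, Submodule A (B i)) (hU : ∀ i, ∀ x ∈ U i, d i x ∈ U (i + 1))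
    (fp : ∀ i, Module.FinitePresentation A (B i ⧸ U i))
    (f : ∀ i, B i →ₗ[A] X.X (i + 1)) (hf : ∀ i x, X.D (i + 1) (f i x) = f (i + 1) (d i x))
    (hfU : ∀ i, ∀ x ∈ U i, f i x = 0) :
    ∃ h : ∀ i, B i →ₗ[A] X.X i, (∀ i, ∀ x ∈ U i, h i x = 0) ∧
      ∀ i x, f i x = X.D i (h i x) + h (i + 1) (d i x) := by
  let N : ∀ i, Submodule A (B i) := fun i => match i with
    | 0 => U 0
    | i + 1 => U (i + 1) ⊔ LinearMap.range (d i)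
  have hUN : ∀ i, U i ≤ N i := by
    intro i
    cases i with
    | zero => exact le_rfl
    | succ i => exact le_sup_left
  have hdN : ∀ i x, d i x ∈ N (i + 1) := fun i x => Submodule.mem_sup_right ⟨x, rfl⟩
  -- maps vanishing on `N`
  have hkill : ∀ i {Y : Type u} [AddCommGroup Y] [Module A Y] (v : B i →ₗ[A] Y),
      (∀ x ∈ U i, v x = 0) → (∀ j (x : B j) (y : B i), j + 1 = i → HEq y (d j x) → v y = 0) →
      ∀ x ∈ N i, v x = 0 := by
    intro i Y _ _ v h1 h2 x hx
    cases i with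
    | zero => exact h1 x hx
    | succ i =>
      obtain ⟨y, hy, _, ⟨z, rfl⟩, rfl⟩ := Submodule.mem_sup.1 hx
      rw [map_add, h1 y hy, zero_add]
      exact h2 i z _ rfl HEq.rfl
  have fpN : ∀ i, Module.FinitePresentation A (B i ⧸ N i) := by
    intro i
    have := fp i
    apply Module.finitePresentation_of_surjective (Submodule.factor (hUN i))
      (Submodule.factor_surjective _)
    cases i with
    | zero =>
      have : LinearMap.ker (Submodule.factor (hUN 0)) = ⊥ := by
        rw [LinearMap.ker_eq_bot']
        intro x hx
        induction x using Submodule.Quotient.induction_on with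
        | H x => exact hx
      rw [this]; exact Submodule.fg_bot
    | succ i =>
      have hfp := fp i
      have : LinearMap.ker (Submodule.factor (hUN (i + 1))) =
          LinearMap.range (Submodule.mapQ (U i) (U (i + 1)) (d i) (hU i)) := by
        ext x
        induction x using Submodule.Quotient.induction_on with
        | H x =>
        rw [LinearMap.mem_ker]
        change Submodule.Quotient.mk x = (0 : B (i + 1) ⧸ N (i + 1)) ↔ _
        rw [Submodule.Quotient.mk_eq_zero]
        constructor
        · intro hx
          obtain ⟨y, hy, _, ⟨z, rfl⟩, rfl⟩ := Submodule.mem_sup.1 hx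
          refine ⟨Submodule.Quotient.mk z, ?_⟩
          rw [Submodule.mapQ_apply, eq_comm, Submodule.Quotient.eq]
          simpa using hy
        · rintro ⟨z, hz⟩
          induction z using Submodule.Quotient.induction_on with
          | H z =>
          rw [Submodule.mapQ_apply, eq_comm, Submodule.Quotient.eq] at hz
          have := add_mem (hUN _ hz) (hdN i z)
          simpa using this
      rw [this]
      exact Submodule.FG.of_finite
  have step1 : ∀ i, ∃ s : B i →ₗ[A] X.X (i + 1),
      (∀ x, X.D (i + 1) (s x) = X.D (i + 1) (f i x)) ∧ ∀ x ∈ N i, s x = 0 := by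
    intro i
    apply X.lift' (i + 1) (N i) (fpN i) (X.D (i + 1) ∘ₗ f i)
    · intro x; exact X.DD _ _
    · apply hkill
      · intro x hx; simp [hfU i x hx]
      · intro j x y e hy
        subst e
        obtain rfl := eq_of_heq hy
        simp only [LinearMap.comp_apply]
        rw [← hf, X.DD]
  choose s hs hsN using step1
  have step2 : ∀ i, ∃ r : B i →ₗ[A] X.X i,
      (∀ x, X.D i (r x) = (f i - s i) x) ∧ ∀ x ∈ U i, r x = 0 := by
    intro i
    apply X.lift' i (U i) (fp i)
    · intro x; simp [hs]
    · intro x hx; simp [hfU i x hx, hsN i x (hUN i hx)]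
  choose r hr hrU using step2
  have step3 : ∀ i, ∃ g : B i →ₗ[A] X.X i,
      (∀ x, X.D i (g x) = (f i - X.D i ∘ₗ r i - r (i + 1) ∘ₗ d i) x) ∧ ∀ x ∈ N i, g x = 0 := by
    intro i
    apply X.lift' i (N i) (fpN i)
    · intro x
      simp only [LinearMap.sub_apply, LinearMap.comp_apply, map_sub, hr, hs, hf]
      rw [hsN (i + 1) _ (hdN i x)]; simp
    · apply hkill
      · intro x hx
        simp [hfU i x hx, hrU i x hx, hrU (i + 1) _ (hU i x hx)]
      · intro j x y e hy
        subst e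
        obtain rfl := eq_of_heq hy
        simp only [LinearMap.sub_apply, LinearMap.comp_apply, dd, map_zero, hr]
        rw [hsN (j + 1) _ (hdN j x)]; simp
  choose g hg hgN using step3
  refine ⟨fun i => r i + g i, fun i x hx => ?_, fun i x => ?_⟩
  · simp [hrU i x hx, hgN i x (hUN i hx)]
  · simp only [LinearMap.add_apply, map_add, hg, hgN (i + 1) _ (hdN i x), LinearMap.sub_apply,
      LinearMap.comp_apply]
    abel

section zorn
variable (X : Target A) (F : ℕ → Type u) [∀ i, AddCommGroup (F i)] [∀ i, Module A (F i)]
    (H : ∀ i, HillFam A (F i)) (d : ∀ i, F i →ₗ[A] F (i + 1))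
    (f : ∀ i, F i →ₗ[A] X.X (i + 1))

/-- partial homotopies -/
structure Good (p : (∀ i, Set (H i).I) × (∀ i, F i →ₗ.[A] X.X i)) : Prop where
  closed : ∀ i, (H i).Closed (p.1 i)
  dom : ∀ i, (p.2 i).domain = (H i).M (p.1 i)
  stable : ∀ i, ∀ x ∈ (H i).M (p.1 i), d i x ∈ (H (i + 1)).M (p.1 (i + 1))
  eq : ∀ i x (hx : x ∈ (p.2 i).domain) (hx' : d i x ∈ (p.2 (i + 1)).domain),
    f i x = X.D i (p.2 i ⟨x, hx⟩) + p.2 (i + 1) ⟨d i x, hx'⟩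

variable {X F H d f}

lemma good_extend (dd : ∀ i x, d (i + 1) (d i x) = 0)
    (hf : ∀ i x, X.D (i + 1) (f i x) = f (i + 1) (d i x))
    {p : (∀ i, Set (H i).I) × (∀ i, F i →ₗ.[A] X.X i)} (hp : Good X F H d f p)
    (i₀ : ℕ) (a : (H i₀).I) :
    ∃ q, Good X F H d f q ∧ p ≤ q ∧ a ∈ q.1 i₀ := by
  -- the finite closed sets
  have hseed : ∀ i, ∃ S : Set (H i).I, S.Finite ∧ (H i).Closed S ∧
      ∀ e : i₀ = i, e ▸ a ∈ S := by
    intro i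
    by_cases e : i₀ = i
    · subst e
      obtain ⟨S, h1, h2, h3⟩ := (H i₀).exists_finite_closed a
      exact ⟨S, h1, h3, fun _ => h2⟩
    · exact ⟨∅, Set.finite_empty, (H i).closed_empty, fun h => (e h).elim⟩
  choose seed hsf hsc hsa using hseed
  have hnext : ∀ i (T : {T : Set (H i).I // T.Finite ∧ (H i).Closed T}),
      ∃ S : Set (H (i + 1)).I, S.Finite ∧ (H (i + 1)).Closed S ∧
        ((H i).M T.1).map (d i) ≤ (H (i + 1)).M S := by
    intro i T
    exact (H (i + 1)).exists_finite_closed_of_fg (((H i).M_finite_fg T.2.1).map (d i))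
  choose nxt hnf hnc hn using hnext
  let T' : ∀ i, {T : Set (H i).I // T.Finite ∧ (H i).Closed T} := fun i =>
    Nat.rec ⟨seed 0, hsf 0, hsc 0⟩ (fun i T => ⟨seed (i + 1) ∪ nxt i T,
      (hsf _).union (hnf _ _), (H (i + 1)).closed_union (hsc _) (hnc _ _)⟩) i
  have hTseed : ∀ i, seed i ⊆ (T' i).1 := by
    intro i
    cases i with
    | zero => exact subset_rfl
    | succ i => exact Set.subset_union_left
  have hTd : ∀ i, ∀ x ∈ (H i).M (T' i).1, d i x ∈ (H (i + 1)).M (T' (i + 1)).1 := by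
    intro i x hx
    have : nxt i (T' i) ⊆ (T' (i + 1)).1 := Set.subset_union_right
    exact (H (i + 1)).M_mono this (hn i (T' i) ⟨x, hx, rfl⟩)
  let S' : ∀ i, Set (H i).I := fun i => p.1 i ∪ (T' i).1
  have hS'c : ∀ i, (H i).Closed (S' i) := fun i => (H i).closed_union (hp.closed i) (T' i).2.2
  have hS'd : ∀ i, ∀ x ∈ (H i).M (S' i), d i x ∈ (H (i + 1)).M (S' (i + 1)) := by
    intro i x hx
    rw [HillFam.M_union, Submodule.mem_sup] at hx
    obtain ⟨y, hy, z, hz, rfl⟩ := hx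
    rw [map_add]
    exact add_mem ((H (i + 1)).M_mono Set.subset_union_left (hp.stable i y hy))
      ((H (i + 1)).M_mono Set.subset_union_right (hTd i z hz))
  let B : ∀ i, Submodule A (F i) := fun i => (H i).M (S' i)
  let U : ∀ i, Submodule A (B i) := fun i => ((H i).M (p.1 i)).submoduleOf (B i)
  have fp : ∀ i, Module.FinitePresentation A (B i ⧸ U i) := fun i =>
    (H i).relFP_union (hp.closed i) _ (T' i).2.1 rfl (T' i).2.2
  let dB : ∀ i, B i →ₗ[A] B (i + 1) := fun i => (d i).restrict (hS'd i)
  have hmem : ∀ i (x : U i), x.1.1 ∈ (p.2 i).domain := fun i x => by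
    rw [hp.dom]; exact x.2
  let φ : ∀ i, U i →ₗ[A] X.X i := fun i =>
    (p.2 i).toFun ∘ₗ (LinearMap.codRestrict _ ((B i).subtype ∘ₗ (U i).subtype) (hmem i))
  have hext : ∀ i, ∃ ψ : B i →ₗ[A] X.X i, ∀ x : U i, ψ x = φ i x := fun i =>
    X.ext i (B i) (U i) (fp i) (φ i)
  choose ψ hψ using hext
  have hUd : ∀ i, ∀ x ∈ U i, dB i x ∈ U (i + 1) := fun i x hx => hp.stable i x.1 hx
  obtain ⟨k, hkU, hk⟩ := null_rel X (fun i => B i) dB (fun i x => Subtype.ext (dd i x.1)) U hUd fp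
    (fun i => f i ∘ₗ (B i).subtype - X.D i ∘ₗ ψ i - ψ (i + 1) ∘ₗ dB i) (by
      intro i x
      have h1 : dB (i + 1) (dB i x) = 0 := Subtype.ext (dd i x.1)
      simp only [LinearMap.sub_apply, LinearMap.comp_apply, map_sub, X.DD, hf, h1, map_zero]
      simp [dB]) (by
      intro i x hx
      simp only [LinearMap.sub_apply, LinearMap.comp_apply]
      have h1 := hψ i ⟨x, hx⟩
      have h2 := hψ (i + 1) ⟨dB i x, hUd i x hx⟩
      simp only at h1 h2
      rw [h1, h2]
      have h3 := hp.eq i x.1 (hmem i ⟨x, hx⟩) (hmem (i + 1) ⟨dB i x, hUd i x hx⟩)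
      change f i x.1 - X.D i (p.2 i ⟨x.1, _⟩) - p.2 (i + 1) ⟨d i x.1, _⟩ = 0
      rw [h3]; abel)
  refine ⟨(S', fun i => ⟨B i, ψ i + k i⟩), ⟨hS'c, fun i => rfl, hS'd, ?_⟩, ⟨?_, ?_⟩, ?_⟩
  · intro i x hx hx'
    have := hk i ⟨x, hx⟩
    simp only [LinearMap.sub_apply, LinearMap.comp_apply] at this
    change f i x = X.D i ((ψ i + k i) ⟨x, hx⟩) + (ψ (i + 1) + k (i + 1)) (dB i ⟨x, hx⟩)
    simp only [LinearMap.add_apply, map_add]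
    have h4 : f i ((B i).subtype ⟨x, hx⟩) = f i x := rfl
    rw [h4] at this
    rw [sub_sub, sub_eq_iff_eq_add] at this
    rw [this]; abel
  · intro i; exact Set.subset_union_left
  · intro i
    refine ⟨?_, ?_⟩
    · rw [hp.dom]; exact (H i).M_mono Set.subset_union_left
    · rintro ⟨x, hx⟩ ⟨y, hy⟩ (hxy : x = y)
      subst hxy
      have hxU : (⟨x, hy⟩ : B i) ∈ U i := by
        have := hx; rw [hp.dom] at this; exact this
      change _ = (ψ i + k i) ⟨x, hy⟩
      rw [LinearMap.add_apply, hkU i _ hxU, add_zero]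
      exact (hψ i ⟨⟨x, hy⟩, hxU⟩).symm
  · exact Or.inr (hTseed i₀ (hsa i₀ rfl))

lemma sSup_exists {E Y : Type u} [AddCommGroup E] [Module A E] [AddCommGroup Y] [Module A Y]
    {ι : Type u} (h : ι → E →ₗ.[A] Y) [Nonempty ι] (hh : ∀ i j, h i ≤ h j ∨ h j ≤ h i) :
    ∃ s : E →ₗ.[A] Y, (∀ x, x ∈ s.domain ↔ ∃ i, x ∈ (h i).domain) ∧ ∀ i, h i ≤ s := by
  have hdir : DirectedOn (· ≤ ·) (Set.range h) := by
    refine IsChain.directedOn ?_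
    rintro _ ⟨p, rfl⟩ _ ⟨q, rfl⟩ _
    exact hh p q
  refine ⟨LinearPMap.sSup _ hdir, fun x => ?_, fun i => LinearPMap.le_sSup _ ⟨i, rfl⟩⟩
  rw [LinearPMap.mem_domain_sSup_iff (Set.range_nonempty h)]
  simp

lemma good_chain {c : Set ((∀ i, Set (H i).I) × (∀ i, F i →ₗ.[A] X.X i))}
    (hc : ∀ p ∈ c, Good X F H d f p) (hch : IsChain (· ≤ ·) c) (hne : c.Nonempty) :
    ∃ q, Good X F H d f q ∧ ∀ p ∈ c, p ≤ q := by
  have : Nonempty c := hne.to_subtype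
  have hex : ∀ i, ∃ s : F i →ₗ.[A] X.X i, (∀ x, x ∈ s.domain ↔ ∃ p : c, x ∈ (p.1.2 i).domain) ∧
      ∀ p : c, p.1.2 i ≤ s := by
    intro i
    apply sSup_exists (fun p : c => p.1.2 i)
    intro p q
    rcases hch.total p.2 q.2 with h | h
    · exact Or.inl (h.2 i)
    · exact Or.inr (h.2 i)
  choose s hmd hs using hex
  let S : ∀ i, Set (H i).I := fun i => ⋃₀ (Set.range fun p : c => p.1.1 i)
  have hsub : ∀ i (p : c), p.1.1 i ⊆ S i := fun i p => Set.subset_sUnion_of_mem ⟨p, rfl⟩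
  have hdom : ∀ i, (s i).domain = (H i).M (S i) := by
    intro i
    apply le_antisymm
    · intro x hx
      obtain ⟨p, hx⟩ := (hmd i x).1 hx
      rw [(hc p p.2).dom] at hx
      exact (H i).M_mono (hsub i p) hx
    · rw [HillFam.M_le]
      rintro b ⟨_, ⟨p, rfl⟩, hb⟩ x hx
      refine (hmd i x).2 ⟨p, ?_⟩
      rw [(hc p p.2).dom]
      exact (H i).range_le hb hx
  have happ : ∀ i (p : c) x (hx : x ∈ (p.1.2 i).domain) (hx' : x ∈ (s i).domain),
      s i ⟨x, hx'⟩ = p.1.2 i ⟨x, hx⟩ := by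
    intro i p x hx hx'
    exact ((hs i p).2 rfl).symm
  refine ⟨(S, s), ⟨?_, hdom, ?_, ?_⟩, ?_⟩
  · intro i
    apply HillFam.closed_sUnion
    rintro _ ⟨p, rfl⟩
    exact (hc p p.2).closed i
  · intro i x hx
    dsimp only at hx ⊢
    rw [← hdom, hmd] at hx
    obtain ⟨p, hx⟩ := hx
    rw [(hc p p.2).dom] at hx
    exact (H (i + 1)).M_mono (hsub _ p) ((hc p p.2).stable i x hx)
  · intro i x hx hx'
    obtain ⟨p, hxp⟩ := (hmd i x).1 hx
    have hxp' : d i x ∈ (p.1.2 (i + 1)).domain := by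
      rw [(hc p p.2).dom] at hxp ⊢
      exact (hc p p.2).stable i x hxp
    dsimp only
    rw [happ i p x hxp, happ (i + 1) p _ hxp']
    exact (hc p p.2).eq i x hxp hxp'
  · intro p hp
    exact ⟨fun i => hsub i ⟨p, hp⟩, fun i => hs i ⟨p, hp⟩⟩

lemma null_hill (X : Target A) (F : ℕ → Type u) [∀ i, AddCommGroup (F i)] [∀ i, Module A (F i)]
    (H : ∀ i, HillFam A (F i)) (d : ∀ i, F i →ₗ[A] F (i + 1))
    (f : ∀ i, F i →ₗ[A] X.X (i + 1)) (dd : ∀ i x, d (i + 1) (d i x) = 0)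
    (hf : ∀ i x, X.D (i + 1) (f i x) = f (i + 1) (d i x)) :
    ∃ h : ∀ i, F i →ₗ[A] X.X i, ∀ i x, f i x = X.D i (h i x) + h (i + 1) (d i x) := by
  have h0 : Good X F H d f (fun _ => ∅, fun _ => ⊥) := by
    refine ⟨fun i => (H i).closed_empty, fun i => ?_, fun i x hx => ?_, fun i x hx hx' => ?_⟩
    · have e : (H i).M ∅ = ⊥ := by simp [HillFam.M]
      exact e.symm
    · have : x = 0 := by simpa [HillFam.M] using hx
      rw [this, map_zero]; exact zero_mem _
    · have : x = 0 := (Submodule.mem_bot A).1 hx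
      subst this
      have e1 : (⟨0, hx⟩ : ((⊥ : F i →ₗ.[A] X.X i)).domain) = 0 := rfl
      have e2 : (⟨d i 0, hx'⟩ : ((⊥ : F (i + 1) →ₗ.[A] X.X (i + 1))).domain) = 0 :=
        Subtype.ext (map_zero _)
      dsimp only
      rw [e1, e2]; simp
  obtain ⟨m, -, hm⟩ := zorn_le_nonempty₀ {p | Good X F H d f p} (fun c hc hch y hy =>
    good_chain hc hch ⟨y, hy⟩) _ h0
  have hfull : ∀ i, (m.2 i).domain = ⊤ := by
    intro i
    rw [hm.prop.dom, ← (H i).M_univ]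
    congr 1
    rw [Set.eq_univ_iff_forall]
    intro a
    obtain ⟨q, hq, hmq, ha⟩ := good_extend dd hf hm.prop i a
    exact (hm.le_of_ge hq hmq).1 i ha
  refine ⟨fun i => (m.2 i).toFun ∘ₗ LinearMap.codRestrict _ LinearMap.id
    (fun x => by rw [hfull]; trivial), fun i x => ?_⟩
  exact hm.prop.eq i x _ _

end zorn
end Homotopy


section Cells
variable {A : Type u} [Ring A] {P : Type u} [AddCommGroup P] [Module A P]

/-- a module over `P` -/
structure St (A : Type u) [Ring A] (P : Type u) [AddCommGroup P] [Module A P] where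
  F : Type u
  [acg : AddCommGroup F]
  [mod : Module A F]
  p : F →ₗ[A] P

attribute [instance] St.acg St.mod

/-- attaching data -/
structure Cell (s : St A P) where
  n : ℕ
  L : Submodule A (Fin n → A)
  fg : L.FG
  φ : L →ₗ[A] s.F
  ψ : (Fin n → A) →ₗ[A] P
  comm : ∀ x : L, s.p (φ x) = ψ x

/-- result of attaching all cells -/
structure Att (s t : St A P) where
  inc : s.F →ₗ[A] t.F
  inj : Function.Injective inc
  p_inc : ∀ x, t.p (inc x) = s.p x
  γ : ∀ c : Cell s, (Fin c.n → A) →ₗ[A] t.F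
  p_γ : ∀ c x, t.p (γ c x) = c.ψ x
  γ_L : ∀ (c : Cell s) (x : c.L), γ c x = inc (c.φ x)
  top : LinearMap.range inc ⊔ ⨆ c, LinearMap.range (γ c) = ⊤
  π : ∀ c : Cell s, t.F →ₗ[A] ((Fin c.n → A) ⧸ c.L)
  π_inc : ∀ c x, π c (inc x) = 0
  π_γ_ne : ∀ c c' x, c' ≠ c → π c (γ c' x) = 0
  π_γ : ∀ c x, π c (γ c x) = c.L.mkQ x

/-- the sum of all cells -/
abbrev CE (s : St A P) := Π₀ c : Cell s, (Fin c.n → A)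
/-- the sum of all cell boundaries -/
abbrev CK (s : St A P) := Π₀ c : Cell s, c.L

lemma att_exists (s : St A P) : ∃ t, Nonempty (Att s t) := by
  classical
  let rφ : (CK s) →ₗ[A] s.F := DFinsupp.lsum ℕ (fun c : Cell s => c.φ)
  let rL : (CK s) →ₗ[A] (CE s) := DFinsupp.mapRange.linearMap (fun c : Cell s => c.L.subtype)
  have hrL : ∀ c (x : c.L), rL (DFinsupp.single c x) = DFinsupp.single c x.1 := by
    intro c x
    exact DFinsupp.mapRange_single (hf := fun c : Cell s => map_zero c.L.subtype)
  have hrL2 : ∀ z c, (rL z) c = (z c).1 := by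
    intro z c
    rfl
  have hrφ : ∀ c (x : c.L), rφ (DFinsupp.single c x) = c.φ x := by
    intro c x
    simp [rφ]
  let rel : (CK s) →ₗ[A] s.F × (CE s) := LinearMap.prod rφ (-rL)
  have hrel : ∀ z, rel z = (rφ z, - rL z) := fun z => rfl
  let q := (LinearMap.range rel).mkQ
  let pp : s.F × (CE s) →ₗ[A] P := LinearMap.coprod s.p (DFinsupp.lsum ℕ (fun c : Cell s => c.ψ))
  have hpp : LinearMap.range rel ≤ LinearMap.ker pp := by
    rw [LinearMap.range_le_ker_iff]
    apply DFinsupp.lhom_ext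
    intro c x
    rw [LinearMap.comp_apply, hrel, hrL, hrφ]
    simp [pp, c.comm]
  let ππ : ∀ c : Cell s, s.F × (CE s) →ₗ[A] ((Fin c.n → A) ⧸ c.L) := fun c =>
    c.L.mkQ ∘ₗ DFinsupp.lapply c ∘ₗ LinearMap.snd A s.F (CE s)
  have hππ : ∀ c, LinearMap.range rel ≤ LinearMap.ker (ππ c) := by
    rintro c _ ⟨z, rfl⟩
    rw [LinearMap.mem_ker, hrel]
    change c.L.mkQ ((- rL z) c) = 0
    rw [DFinsupp.neg_apply, hrL2]
    simp
  refine ⟨⟨(s.F × (CE s)) ⧸ LinearMap.range rel, Submodule.liftQ _ pp hpp⟩, ⟨⟨q ∘ₗ LinearMap.inl A s.F (CE s), ?_, ?_, fun c => q ∘ₗ LinearMap.inr A s.F (CE s) ∘ₗ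
      (DFinsupp.lsingle (M := fun c : Cell s => (Fin c.n → A)) c),
    ?_, ?_, ?_, fun c => Submodule.liftQ _ (ππ c) (hππ c), ?_, ?_, ?_⟩⟩⟩
  · rw [← LinearMap.ker_eq_bot, LinearMap.ker_eq_bot']
    intro x hx
    have hx' : ((x, 0) : s.F × (CE s)) ∈ LinearMap.range rel := by
      rw [← Submodule.Quotient.mk_eq_zero]; exact hx
    obtain ⟨z, hz⟩ := hx'
    have h1 : rφ z = x := congrArg Prod.fst hz
    have h2 : - rL z = 0 := congrArg Prod.snd hz
    have hz0 : z = 0 := by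
      ext c i
      have := DFunLike.congr_fun (neg_eq_zero.1 h2) c
      rw [hrL2] at this
      exact congrFun this i
    rw [← h1, hz0, map_zero]
  · intro x
    change pp (x, 0) = _
    simp [pp]
  · intro c x
    change pp (0, DFinsupp.single c x) = _
    simp [pp]
  · intro c x
    change Submodule.Quotient.mk ((0 : s.F), (DFinsupp.single c x.1 : (CE s))) =
      Submodule.Quotient.mk (c.φ x, (0 : (CE s)))
    rw [eq_comm, Submodule.Quotient.eq]
    refine ⟨DFinsupp.single c x, ?_⟩
    rw [hrel, hrL, hrφ]; simp
  · rw [eq_top_iff]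
    rintro y -
    induction y using Submodule.Quotient.induction_on with
    | H y =>
    obtain ⟨x, e⟩ := y
    have hsplit : (Submodule.Quotient.mk (x, e) : (s.F × (CE s)) ⧸ LinearMap.range rel) =
        (q ∘ₗ LinearMap.inl A s.F (CE s)) x + (q ∘ₗ LinearMap.inr A s.F (CE s)) e := by
      rw [LinearMap.comp_apply, LinearMap.comp_apply, ← map_add]
      simp [q]
    rw [hsplit]
    refine add_mem (Submodule.mem_sup_left ⟨x, rfl⟩) (Submodule.mem_sup_right ?_)
    induction e using DFinsupp.induction with
    | h0 => rw [map_zero]; exact zero_mem _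
    | ha c b f _ _ ih =>
      rw [map_add]
      exact add_mem (Submodule.mem_iSup_of_mem c ⟨b, rfl⟩) (ih (by
        rw [LinearMap.comp_apply, LinearMap.comp_apply, ← map_add]
        simp [q]))
  · intro c x
    change ππ c (x, 0) = 0
    simp [ππ]
  · intro c c' x hne
    change ππ c (0, DFinsupp.single c' x) = 0
    simp [ππ, DFinsupp.single_eq_of_ne hne.symm]
  · intro c x
    change ππ c (0, DFinsupp.single c x) = _
    simp [ππ]

lemma exists_seq (A : Type u) [Ring A] (P : Type u) [AddCommGroup P] [Module A P] :
    ∃ (s : ℕ → St A P) (_ : ∀ i, Att (s i) (s (i + 1))), Subsingleton (s 0).F := by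
  choose nx hnx using fun s : St A P => att_exists s
  let s : ℕ → St A P := fun i => Nat.rec ⟨PUnit, 0⟩ (fun _ t => nx t) i
  exact ⟨s, fun i => (hnx (s i)).some, inferInstanceAs (Subsingleton PUnit)⟩

lemma exists_order (I : Type u) (ρ : I → ℕ) : ∃ (_ : LinearOrder I) (_ : WellFoundedLT I),
    (∀ a b : I, a < b → ρ a ≤ ρ b) ∧ ∀ a b : I, ρ a < ρ b → a < b := by
  obtain ⟨Λ, iΛ, iw, e, he, he1, he2⟩ : ∃ (Λ : Type u) (_ : LinearOrder Λ) (_ : WellFoundedLT Λ)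
      (e : I → Λ), Function.Injective e ∧ (∀ a b, e a < e b → ρ a ≤ ρ b) ∧
      ∀ a b, ρ a < ρ b → e a < e b := by
    obtain ⟨o, w⟩ := exists_wellFoundedLT I
    refine ⟨ℕ ×ₗ I, inferInstance, inferInstance, fun a => toLex (ρ a, a),
      fun a b h => congrArg (fun z => (ofLex z).2) h, ?_, ?_⟩
    · intro a b h'
      rw [Prod.Lex.lt_iff] at h'
      rcases h' with h' | h'
      · exact h'.le
      · exact h'.1.le
    · intro a b h
      rw [Prod.Lex.lt_iff]
      exact Or.inl h
  let o : LinearOrder I := LinearOrder.lift' e he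
  exact ⟨o, ⟨InvImage.wf e (wellFounded_lt (α := Λ))⟩, he1, he2⟩

/-- The limit of the sequence, with its properties. -/
lemma exists_limit (s : ℕ → St A P) (a : ∀ i, Att (s i) (s (i + 1))) :
    ∃ (F : Type u) (_ : AddCommGroup F) (_ : Module A F) (p : F →ₗ[A] P)
      (of : ∀ i, (s i).F →ₗ[A] F),
      (∀ i x, p (of i x) = (s i).p x) ∧
      (∀ i, Function.Injective (of i)) ∧
      (∀ i x, of (i + 1) ((a i).inc x) = of i x) ∧
      ∀ y, ∃ i x, of i x = y := by
  let G : ℕ → Type u := fun i => (s i).F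
  let f : ∀ i j, i ≤ j → G i →ₗ[A] G j := fun i j h =>
    Nat.leRecOn (C := fun k => G i →ₗ[A] G k) h (fun {k} φ => (a k).inc ∘ₗ φ) LinearMap.id
  have hid : ∀ i x, f i i le_rfl x = x := by
    intro i x
    simp only [f]
    rw [Nat.leRecOn_self]
    rfl
  have hstep : ∀ i j (h : i ≤ j) x, f i (j + 1) (h.trans (Nat.le_succ j)) x =
      (a j).inc (f i j h x) := by
    intro i j h x
    simp only [f]
    rw [Nat.leRecOn_succ h]
    rfl
  have hsucc : ∀ i (h : i ≤ i + 1) x, f i (i + 1) h x = (a i).inc x := by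
    intro i h x
    rw [hstep i i le_rfl, hid]
  have hcomp : ∀ i j l (h : i ≤ j) (h' : j ≤ l) x, f j l h' (f i j h x) = f i l (h.trans h') x := by
    intro i j l h h' x
    induction l, h' using Nat.le_induction with
    | base => rw [hid]
    | succ l h' ih => rw [hstep j l h', hstep i l (h.trans h'), ih]
  have hsys : DirectedSystem G (fun i j h => f i j h) :=
    ⟨fun i x => hid i x, fun i j l h h' x => hcomp _ _ _ _ _ _⟩
  have hinj : ∀ i j (h : i ≤ j), Function.Injective (f i j h) := by
    intro i j h
    induction j, h using Nat.le_induction with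
    | base => intro x y hxy; rwa [hid, hid] at hxy
    | succ j h ih =>
      intro x y hxy
      rw [hstep i j h, hstep i j h] at hxy
      exact ih ((a j).inj hxy)
  have hp : ∀ i j (h : i ≤ j) (x : G i), (s j).p (f i j h x) = (s i).p x := by
    intro i j h x
    induction j, h using Nat.le_induction with
    | base => rw [hid]
    | succ j h ih =>
      rw [hstep i j h]
      exact ((a j).p_inc _).trans ih
  refine ⟨Module.DirectLimit G f, inferInstance, inferInstance,
    Module.DirectLimit.lift A ℕ G f (fun i => (s i).p) hp,
    fun i => Module.DirectLimit.of A ℕ G f i, ?_, ?_, ?_, ?_⟩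
  · intro i x
    exact Module.DirectLimit.lift_of _ _ _
  · intro i
    change Function.Injective (Module.DirectLimit.of A ℕ G f i)
    rw [← LinearMap.ker_eq_bot, LinearMap.ker_eq_bot']
    intro x hx
    obtain ⟨j, h, hj⟩ := Module.DirectLimit.of.zero_exact hx
    exact hinj i j h (by rw [hj, map_zero])
  · intro i x
    have := Module.DirectLimit.of_f (R := A) (ι := ℕ) (G := G) (f := f) (i := i) (j := i + 1)
      (hij := Nat.le_succ i) (x := x)
    rw [hsucc] at this
    exact this
  · intro y
    exact Module.DirectLimit.exists_of y

theorem exists_precover (P : Type u) [AddCommGroup P] [Module A P] :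
    ∃ (F : Type u) (_ : AddCommGroup F) (_ : Module A F) (_ : HillFam A F) (p : F →ₗ[A] P),
      Function.Surjective p ∧
      ∀ (n : ℕ) (L : Submodule A (Fin n → A)), L.FG → ∀ φ : L →ₗ[A] LinearMap.ker p,
        ∃ ψ : (Fin n → A) →ₗ[A] LinearMap.ker p, ∀ x : L, ψ x = φ x := by
  obtain ⟨s, at_, hs0⟩ := exists_seq A P
  obtain ⟨F, i1, i2, p, of, hp, hinj, hinc, hex⟩ := exists_limit s at_
  let I := Σ i, Cell (s i)
  obtain ⟨o, w, ho1, ho2⟩ := exists_order I (fun a => a.1)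
  let g : ∀ a : I, (Fin a.2.n → A) →ₗ[A] F := fun a => of (a.1 + 1) ∘ₗ (at_ a.1).γ a.2
  have hrange_succ : ∀ i, LinearMap.range (of i) ≤ LinearMap.range (of (i + 1)) := by
    rintro i _ ⟨x, rfl⟩
    exact ⟨_, hinc i x⟩
  have hmono : Monotone fun i => LinearMap.range (of i) := monotone_nat_of_le_succ hrange_succ
  have hgr : ∀ a : I, LinearMap.range (g a) ≤ LinearMap.range (of (a.1 + 1)) := by
    rintro a _ ⟨x, rfl⟩
    exact ⟨_, rfl⟩
  have hof : ∀ i, LinearMap.range (of i) ≤ ⨆ b : I, ⨆ (_ : b.1 < i), LinearMap.range (g b) := by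
    intro i
    induction i with
    | zero =>
      rintro _ ⟨x, rfl⟩
      have : x = 0 := Subsingleton.elim _ _
      rw [this, map_zero]; exact zero_mem _
    | succ i ih =>
      have h1 : LinearMap.range (of (i + 1)) = LinearMap.range (of i) ⊔
          ⨆ c, LinearMap.range (g ⟨i, c⟩) := by
        rw [LinearMap.range_eq_map, ← (at_ i).top, Submodule.map_sup, Submodule.map_iSup]
        congr 1
        · ext y
          constructor
          · rintro ⟨_, ⟨x, rfl⟩, rfl⟩
            exact ⟨x, (hinc i x).symm⟩
          · rintro ⟨x, rfl⟩
            exact ⟨_, ⟨x, rfl⟩, hinc i x⟩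
        · congr 1
          ext c y
          constructor
          · rintro ⟨_, ⟨x, rfl⟩, rfl⟩
            exact ⟨x, rfl⟩
          · rintro ⟨x, rfl⟩
            exact ⟨_, ⟨x, rfl⟩, rfl⟩
      rw [h1]
      refine sup_le (ih.trans ?_) (iSup_le fun c => ?_)
      · exact iSup₂_le fun b hb => le_iSup₂_of_le b (hb.trans (Nat.lt_succ_self i)) le_rfl
      · exact le_iSup₂_of_le (⟨i, c⟩ : I) (Nat.lt_succ_self i) le_rfl
  let H : HillFam A F := {
    I := I
    ord := o
    wf := w
    n := fun a => a.2.n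
    g := g
    fg := by
      rintro ⟨i, c⟩
      have : (⨆ b : I, ⨆ (_ : b < ⟨i, c⟩), LinearMap.range (g b)).comap (g ⟨i, c⟩) = c.L := by
        apply le_antisymm
        · intro x hx
          have hle : (⨆ b : I, ⨆ (_ : b < ⟨i, c⟩), LinearMap.range (g b)) ≤
              (LinearMap.ker ((at_ i).π c)).map (of (i + 1)) := by
            refine iSup₂_le fun b hb => ?_
            rcases (ho1 _ _ hb).lt_or_eq with h | h
            · refine ((hgr b).trans (hmono h)).trans ?_
              rintro _ ⟨y, rfl⟩
              exact ⟨_, (at_ i).π_inc c y, hinc i y⟩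
            · obtain ⟨j, c'⟩ := b
              dsimp only at h
              subst h
              rintro _ ⟨y, rfl⟩
              refine ⟨_, (at_ j).π_γ_ne c c' y ?_, rfl⟩
              rintro rfl
              exact lt_irrefl _ hb
          obtain ⟨y, hy, hyx⟩ := hle hx
          have hyx' := hinj (i + 1) hyx
          rw [hyx'] at hy
          have := ((at_ i).π_γ c x).symm.trans hy
          simpa using this
        · intro x hx
          have h1 : g ⟨i, c⟩ x = of i (c.φ ⟨x, hx⟩) := by
            rw [← hinc]
            exact congrArg (of (i + 1)) ((at_ i).γ_L c ⟨x, hx⟩)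
          rw [Submodule.mem_comap, h1]
          refine (iSup₂_le fun b hb => ?_ : (⨆ b : I, ⨆ (_ : b.1 < i), LinearMap.range (g b)) ≤ _)
            (hof i ⟨_, rfl⟩)
          exact le_iSup₂_of_le b (ho2 _ _ hb) le_rfl
      rw [this]
      exact c.fg
    top := by
      rw [eq_top_iff]
      rintro y -
      obtain ⟨i, x, rfl⟩ := hex y
      exact (iSup₂_le fun b hb => le_iSup (fun b => LinearMap.range (g b)) b :
        (⨆ b : I, ⨆ (_ : b.1 < i), LinearMap.range (g b)) ≤ _) (hof i ⟨_, rfl⟩) }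
  refine ⟨F, i1, i2, H, p, ?_, ?_⟩
  · intro y
    let c : Cell (s 0) := ⟨1, ⊥, Submodule.fg_bot, 0,
      (LinearMap.toSpanSingleton A P y) ∘ₗ LinearMap.proj 0, by
        rintro ⟨x, hx⟩
        rw [Submodule.mem_bot] at hx
        simp [hx]⟩
    refine ⟨of 1 ((at_ 0).γ c (fun _ => 1)), ?_⟩
    rw [hp]
    refine ((at_ 0).p_γ c _).trans ?_
    simp [c]
  · intro n L hL φ
    have hfin : Module.Finite A L := Module.Finite.iff_fg.2 hL
    have hcpt : (LinearMap.range ((LinearMap.ker p).subtype ∘ₗ φ)).FG := Submodule.FG.of_finite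
    rw [Submodule.fg_iff_compact] at hcpt
    have htop : (⨆ i, LinearMap.range (of i)) = ⊤ := by
      rw [eq_top_iff]
      rintro y -
      obtain ⟨i, x, rfl⟩ := hex y
      exact Submodule.mem_iSup_of_mem i ⟨x, rfl⟩
    obtain ⟨S, hs⟩ := CompleteLattice.IsCompactElement.exists_finset_of_le_iSup _ hcpt
      (fun i => LinearMap.range (of i)) (htop ▸ le_top)
    let i := S.sup id
    have hi : ∀ x : L, (φ x).1 ∈ LinearMap.range (of i) := by
      intro x
      refine (hs.trans (iSup₂_le fun j hj => hmono ?_)) ⟨x, rfl⟩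
      exact Finset.le_sup (f := id) hj
    let e := LinearEquiv.ofInjective (of i) (hinj i)
    let φ' : L →ₗ[A] (s i).F := e.symm.toLinearMap ∘ₗ
      LinearMap.codRestrict _ ((LinearMap.ker p).subtype ∘ₗ φ) hi
    have hφ' : ∀ x, of i (φ' x) = (φ x).1 := by
      intro x
      have : (e (φ' x)).1 = (φ x).1 := by simp [φ']; rfl
      exact this
    let c : Cell (s i) := ⟨n, L, hL, φ', 0, by
      intro x
      rw [← hp, hφ']
      exact (φ x).2⟩
    refine ⟨LinearMap.codRestrict _ (of (i + 1) ∘ₗ (at_ i).γ c) ?_, ?_⟩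
    · intro x
      rw [LinearMap.mem_ker, LinearMap.comp_apply, hp]
      exact (at_ i).p_γ c x
    · intro x
      apply Subtype.ext
      change of (i + 1) ((at_ i).γ c x) = _
      have := (at_ i).γ_L c x
      rw [← hφ', ← hinc i (φ' x)]
      exact congrArg (of (i + 1)) this

end Cells

universe w

section ExtBridge
variable {A : Type u} [Ring A]

/-- short complex from linear maps -/
abbrev scOf {M N K : ModuleCat.{u} A} (f : M →ₗ[A] N) (g : N →ₗ[A] K)
    (hex : Function.Exact f g) : ShortComplex (ModuleCat.{u} A) :=
  ShortComplex.mk (ModuleCat.ofHom f) (ModuleCat.ofHom g) (by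
    ext x
    exact (hex (f x)).2 ⟨x, rfl⟩)

lemma scOf_exact {M N K : ModuleCat.{u} A} (f : M →ₗ[A] N) (g : N →ₗ[A] K)
    (hex : Function.Exact f g) (hf : Function.Injective f) (hg : Function.Surjective g) :
    (scOf f g hex).ShortExact := by
  refine ShortComplex.ShortExact.mk' ?_ ?_ ?_
  · rw [ShortComplex.ShortExact.moduleCat_exact_iff_function_exact]
    exact hex
  · exact (ModuleCat.mono_iff_injective _).2 hf
  · exact (ModuleCat.epi_iff_surjective _).2 hg

variable [HasExt.{w} (ModuleCat.{u} A)]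

lemma extend_of_ext {M N K J : ModuleCat.{u} A} (f : M →ₗ[A] N) (g : N →ₗ[A] K)
    (hex : Function.Exact f g) (hf : Function.Injective f) (hg : Function.Surjective g)
    (h : Subsingleton (Abelian.Ext K J 1)) (φ : M →ₗ[A] J) :
    ∃ ψ : N →ₗ[A] J, ∀ x, ψ (f x) = φ x := by
  obtain ⟨y, hy⟩ := Abelian.Ext.contravariant_sequence_exact₁ (scOf_exact f g hex hf hg) J
    (Abelian.Ext.mk₀ (ModuleCat.ofHom φ)) (n₁ := 1) rfl (Subsingleton.elim (α := Abelian.Ext K J 1) _ _)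
  obtain ⟨ψ, rfl⟩ := (Abelian.Ext.mk₀_bijective _ _).2 y
  rw [Abelian.Ext.mk₀_comp_mk₀] at hy
  have := (Abelian.Ext.mk₀_bijective _ _).1 hy
  refine ⟨ψ.hom, fun x => ?_⟩
  exact LinearMap.congr_fun (congrArg ModuleCat.Hom.hom this) x

lemma ext_of_extend {M N K J : ModuleCat.{u} A} (f : M →ₗ[A] N) (g : N →ₗ[A] K)
    (hex : Function.Exact f g) (hf : Function.Injective f) (hg : Function.Surjective g)
    (h : Subsingleton (Abelian.Ext N J 1))
    (H : ∀ φ : M →ₗ[A] J, ∃ ψ : N →ₗ[A] J, ∀ x, ψ (f x) = φ x) :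
    Subsingleton (Abelian.Ext K J 1) := by
  refine subsingleton_of_forall_eq 0 fun x => ?_
  obtain ⟨y, hy⟩ := Abelian.Ext.contravariant_sequence_exact₃ (scOf_exact f g hex hf hg) J
    x (Subsingleton.elim (α := Abelian.Ext N J 1) _ _) (n₀ := 0) rfl
  obtain ⟨φ, rfl⟩ := (Abelian.Ext.mk₀_bijective _ _).2 y
  obtain ⟨ψ, hψ⟩ := H φ.hom
  have : φ = ModuleCat.ofHom f ≫ ModuleCat.ofHom ψ := by
    ext x
    exact (hψ x).symm
  rw [← hy, this]
  have h2 := Abelian.Ext.mk₀_comp_mk₀ (ModuleCat.ofHom f) (ModuleCat.ofHom ψ)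
  erw [← h2]
  exact (scOf_exact f g hex hf hg).extClass_comp_assoc _

lemma lift_of_ext {M N K T : ModuleCat.{u} A} (f : M →ₗ[A] N) (g : N →ₗ[A] K)
    (hex : Function.Exact f g) (hf : Function.Injective f) (hg : Function.Surjective g)
    (h : Subsingleton (Abelian.Ext T M 1)) (v : T →ₗ[A] K) :
    ∃ s : T →ₗ[A] N, ∀ x, g (s x) = v x := by
  obtain ⟨y, hy⟩ := Abelian.Ext.covariant_sequence_exact₃ T (scOf_exact f g hex hf hg)
    (Abelian.Ext.mk₀ (ModuleCat.ofHom v)) (n₁ := 1) rfl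
    (Subsingleton.elim (α := Abelian.Ext T M 1) _ _)
  obtain ⟨ψ, rfl⟩ := (Abelian.Ext.mk₀_bijective _ _).2 y
  rw [Abelian.Ext.mk₀_comp_mk₀] at hy
  have := (Abelian.Ext.mk₀_bijective _ _).1 hy
  refine ⟨ψ.hom, fun x => ?_⟩
  exact LinearMap.congr_fun (congrArg ModuleCat.Hom.hom this) x

lemma ext_shift {M N K : ModuleCat.{u} A} (f : M →ₗ[A] N) (g : N →ₗ[A] K)
    (hex : Function.Exact f g) (hf : Function.Injective f) (hg : Function.Surjective g)
    [Injective N] (T : ModuleCat.{u} A) (n : ℕ) (hn : 1 ≤ n)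
    (h : Subsingleton (Abelian.Ext T M (n + 1))) : Subsingleton (Abelian.Ext T K n) := by
  refine subsingleton_of_forall_eq 0 fun x => ?_
  obtain ⟨y, hy⟩ := Abelian.Ext.covariant_sequence_exact₃ T (scOf_exact f g hex hf hg)
    x (n₁ := n + 1) rfl (Subsingleton.elim (α := Abelian.Ext T M (n + 1)) _ _)
  obtain ⟨m, rfl⟩ := Nat.exists_eq_add_of_le' hn
  have : y = 0 := Abelian.Ext.eq_zero_of_injective (I := N) y
  rw [← hy, this, Abelian.Ext.zero_comp]

end ExtBridge


section Final
variable {R : Type u} [Ring R]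

lemma fpInj_extend (J : RightMod R) (hJ : FpInjective R J) (B : Type u) [AddCommGroup B]
    [Module Rᵐᵒᵖ B] (N : Submodule Rᵐᵒᵖ B) (hN : Module.FinitePresentation Rᵐᵒᵖ (B ⧸ N))
    (φ : N →ₗ[Rᵐᵒᵖ] J) : ∃ ψ : B →ₗ[Rᵐᵒᵖ] J, ∀ x : N, ψ x = φ x :=
  extend_of_ext (M := ModuleCat.of _ N) (N := ModuleCat.of _ B) (K := ModuleCat.of _ (B ⧸ N)) (J := J)
    N.subtype N.mkQ (LinearMap.exact_subtype_mkQ N) N.injective_subtype N.mkQ_surjective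
    (hJ (ModuleCat.of _ (B ⧸ N)) hN) φ

lemma fpInj_of_extend (J : RightMod R)
    (H : ∀ (n : ℕ) (L : Submodule Rᵐᵒᵖ (Fin n → Rᵐᵒᵖ)), L.FG → ∀ φ : L →ₗ[Rᵐᵒᵖ] J,
      ∃ ψ : (Fin n → Rᵐᵒᵖ) →ₗ[Rᵐᵒᵖ] J, ∀ x : L, ψ x = φ x) : FpInjective R J := by
  intro T hT
  obtain ⟨n, L, e, hL⟩ := Module.FinitePresentation.exists_fin Rᵐᵒᵖ T
  have hproj : Projective (ModuleCat.of Rᵐᵒᵖ (Fin n → Rᵐᵒᵖ)) :=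
    (IsProjective.iff_projective (Fin n → Rᵐᵒᵖ)).1 inferInstance
  refine ext_of_extend (M := ModuleCat.of _ L) (N := ModuleCat.of _ (Fin n → Rᵐᵒᵖ)) (K := T) (J := J)
    L.subtype (e.symm.toLinearMap ∘ₗ L.mkQ) ?_ L.injective_subtype
    (e.symm.surjective.comp L.mkQ_surjective) ?_ (H n L hL)
  · exact (e.symm.injective.comp_exact_iff_exact).2 (LinearMap.exact_subtype_mkQ L)
  · exact Abelian.Ext.subsingleton_of_projective (ModuleCat.of Rᵐᵒᵖ (Fin n → Rᵐᵒᵖ)) J 0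

lemma fpProj_split (P : RightMod R) (hP : FpProjective R P) :
    ∃ (F : Type u) (_ : AddCommGroup F) (_ : Module Rᵐᵒᵖ F) (_ : HillFam Rᵐᵒᵖ F)
      (p : F →ₗ[Rᵐᵒᵖ] P) (i : P →ₗ[Rᵐᵒᵖ] F), ∀ x, p (i x) = x := by
  obtain ⟨F, i1, i2, H, p, hp, hker⟩ := exists_precover (A := Rᵐᵒᵖ) P
  obtain ⟨i, hi⟩ := lift_of_ext (M := ModuleCat.of _ (LinearMap.ker p)) (N := ModuleCat.of _ F)
    (K := P) (T := P) (LinearMap.ker p).subtype p (LinearMap.exact_subtype_ker_map p)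
    (Submodule.injective_subtype _) hp
    (hP _ (fpInj_of_extend (ModuleCat.of _ (LinearMap.ker p)) hker)) LinearMap.id
  exact ⟨F, i1, i2, H, p, i, hi⟩

lemma null_fpProj (X : Target Rᵐᵒᵖ) (P : ℕ → RightMod R) (hP : ∀ i, FpProjective R (P i))
    (d : ∀ i, P i →ₗ[Rᵐᵒᵖ] P (i + 1)) (f : ∀ i, P i →ₗ[Rᵐᵒᵖ] X.X (i + 1))
    (dd : ∀ i x, d (i + 1) (d i x) = 0)
    (hf : ∀ i x, X.D (i + 1) (f i x) = f (i + 1) (d i x)) :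
    ∃ h : ∀ i, P i →ₗ[Rᵐᵒᵖ] X.X i, ∀ i x, f i x = X.D i (h i x) + h (i + 1) (d i x) := by
  choose F i1 i2 H p s hs using fun i => fpProj_split (P i) (hP i)
  obtain ⟨h, hh⟩ := null_hill X F H (fun i => s (i + 1) ∘ₗ d i ∘ₗ p i) (fun i => f i ∘ₗ p i)
    (by intro i x; simp [hs, dd]) (by intro i x; simp [hs, hf])
  refine ⟨fun i => h i ∘ₗ s i, fun i x => ?_⟩
  have := hh i (s i x)
  simpa [hs] using this

/-- stage of a resolution -/
structure Res (R : Type u) [Ring R] where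
  X : RightMod R
  K : RightMod R
  π : X →ₗ[Rᵐᵒᵖ] K
  lift : ∀ T : RightMod R, Module.FinitePresentation Rᵐᵒᵖ T → ∀ v : T →ₗ[Rᵐᵒᵖ] K,
    ∃ w : T →ₗ[Rᵐᵒᵖ] X, ∀ x, π (w x) = v x
  hK : StronglyFpInjective R K
  hX : FpInjective R X

lemma res_next (s : Res R) : ∃ t : Res R, Injective t.X ∧ ∃ j : s.K →ₗ[Rᵐᵒᵖ] t.X,
    Function.Injective j ∧ Function.Exact j t.π := by
  let E : RightMod R := Injective.under s.K
  let j : s.K →ₗ[Rᵐᵒᵖ] E := (Injective.ι s.K).hom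
  have hj : Function.Injective j := (ModuleCat.mono_iff_injective (Injective.ι s.K)).1 inferInstance
  let Q : RightMod R := ModuleCat.of Rᵐᵒᵖ (E ⧸ LinearMap.range j)
  let π : E →ₗ[Rᵐᵒᵖ] Q := (LinearMap.range j).mkQ
  have hπ : Function.Surjective π := Submodule.mkQ_surjective _
  have hex : Function.Exact j π := by
    intro y
    exact Submodule.Quotient.mk_eq_zero _
  have hE : Injective E := inferInstanceAs (Injective (Injective.under s.K))
  refine ⟨⟨E, Q, π, ?_, ?_, ?_⟩, hE, j, hj, hex⟩
  · intro T hT v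
    exact lift_of_ext j π hex hj hπ (s.hK T hT 1 le_rfl) v
  · intro T hT n hn
    exact ext_shift j π hex hj hπ T n hn (s.hK T hT (n + 1) (by omega))
  · intro T hT
    exact Abelian.Ext.subsingleton_of_injective T E 0

lemma injective_extend (J : RightMod R) (hJ : Injective J) (B : Type u) [AddCommGroup B]
    [Module Rᵐᵒᵖ B] (N : Submodule Rᵐᵒᵖ B)
    (φ : N →ₗ[Rᵐᵒᵖ] J) : ∃ ψ : B →ₗ[Rᵐᵒᵖ] J, ∀ x : N, ψ x = φ x := by
  let k : ModuleCat.of Rᵐᵒᵖ N ⟶ ModuleCat.of Rᵐᵒᵖ B := ModuleCat.ofHom N.subtype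
  have : Mono k := (ModuleCat.mono_iff_injective _).2 N.injective_subtype
  refine ⟨(Injective.factorThru (ModuleCat.ofHom φ) k).hom, fun x => ?_⟩
  exact LinearMap.congr_fun (congrArg ModuleCat.Hom.hom
    (Injective.comp_factorThru (ModuleCat.ofHom φ) k)) x

lemma exists_res (J : RightMod R) (hJ : StronglyFpInjective R J) :
    ∃ (s : ℕ → Res R) (j : ∀ i, (s i).K →ₗ[Rᵐᵒᵖ] (s (i + 1)).X) (e : J →ₗ[Rᵐᵒᵖ] (s 0).X),
      (∀ i, Injective (s (i + 1)).X) ∧ (∀ i, Function.Injective (j i)) ∧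
      (∀ i, Function.Exact (j i) (s (i + 1)).π) ∧ Function.Bijective e ∧
      Function.Injective (s 0).π := by
  choose nx h1 jj h2 h3 using fun s : Res R => res_next s
  let s : ℕ → Res R := fun i => Nat.rec
    ⟨J, J, LinearMap.id, fun T _ v => ⟨v, fun _ => rfl⟩, hJ, fun T hT => hJ T hT 1 le_rfl⟩
    (fun _ t => nx t) i
  exact ⟨s, fun i => jj (s i), (LinearMap.id : J →ₗ[Rᵐᵒᵖ] J), fun i => h1 (s i), fun i => h2 (s i),
    fun i => h3 (s i), Function.bijective_id, fun _ _ h => h⟩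

lemma exists_target (J : RightMod R) (hJ : StronglyFpInjective R J) :
    ∃ (X : Target Rᵐᵒᵖ) (e : J →ₗ[Rᵐᵒᵖ] X.X 0), Function.Bijective e ∧
      Function.Injective (X.D 0) ∧
      ∀ (i : ℕ) (B : Type u) [AddCommGroup B] [Module Rᵐᵒᵖ B] (N : Submodule Rᵐᵒᵖ B)
        (φ : N →ₗ[Rᵐᵒᵖ] X.X (i + 1)), ∃ ψ : B →ₗ[Rᵐᵒᵖ] X.X (i + 1), ∀ x : N, ψ x = φ x := by
  obtain ⟨s, j, e, hinj, hj, hex, he, h0⟩ := exists_res J hJ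
  refine ⟨{ X := fun i => (s i).X
            D := fun i => j i ∘ₗ (s i).π
            DD := ?_
            ext := ?_
            lift := ?_ }, e, he, ?_, ?_⟩
  · intro i x
    have : (s (i + 1)).π (j i ((s i).π x)) = 0 := (hex i _).2 ⟨_, rfl⟩
    simp [this]
  · intro i B _ _ N hN φ
    exact fpInj_extend (s i).X (s i).hX B N hN φ
  · intro i T _ _ hT v hv
    have hv' : ∀ x, v x ∈ LinearMap.range (j i) := by
      intro x
      refine (hex i _).1 (hj (i + 1) ?_)
      rw [map_zero]
      exact hv x
    let q := LinearEquiv.ofInjective (j i) (hj i)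
    obtain ⟨w, hw⟩ := (s i).lift (ModuleCat.of _ T) hT
      (q.symm.toLinearMap ∘ₗ v.codRestrict _ hv')
    refine ⟨w, fun x => ?_⟩
    have h1 : (j i) ((s i).π (w x)) = (q (q.symm (v.codRestrict _ hv' x))).1 :=
      congrArg (j i) (hw x)
    rw [LinearEquiv.apply_symm_apply] at h1
    exact h1
  · exact (hj 0).comp h0
  · intro i B _ _ N φ
    exact injective_extend (s (i + 1)).X (hinj i) B N φ

/-- Extending a partial map to a chain map. -/
lemma exists_chain (X : Target Rᵐᵒᵖ)
    (hX : ∀ (i : ℕ) (B : Type u) [AddCommGroup B] [Module Rᵐᵒᵖ B] (N : Submodule Rᵐᵒᵖ B)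
        (φ : N →ₗ[Rᵐᵒᵖ] X.X (i + 1)), ∃ ψ : B →ₗ[Rᵐᵒᵖ] X.X (i + 1), ∀ x : N, ψ x = φ x)
    (P : ℕ → RightMod R)
    (d : ∀ i, P i →ₗ[Rᵐᵒᵖ] P (i + 1))
    (hd : ∀ i, Function.Exact (d i) (d (i + 1)))
    (φ : LinearMap.ker (d 0) →ₗ[Rᵐᵒᵖ] X.X 0) :
    ∃ f : ∀ i, P i →ₗ[Rᵐᵒᵖ] X.X (i + 1), (∀ z : LinearMap.ker (d 0), f 0 z = X.D 0 (φ z)) ∧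
      ∀ i x, X.D (i + 1) (f i x) = f (i + 1) (d i x) := by
  have step : ∀ i (f : {f : P i →ₗ[Rᵐᵒᵖ] X.X (i + 1) // ∀ x, d i x = 0 → X.D (i + 1) (f x) = 0}),
      ∃ g : {f : P (i + 1) →ₗ[Rᵐᵒᵖ] X.X (i + 1 + 1) //
        ∀ x, d (i + 1) x = 0 → X.D (i + 1 + 1) (f x) = 0},
        ∀ x, X.D (i + 1) (f.1 x) = g.1 (d i x) := by
    rintro i ⟨f, hf⟩
    let q := (d i).quotKerEquivRange
    let u : (P i ⧸ LinearMap.ker (d i)) →ₗ[Rᵐᵒᵖ] X.X (i + 1 + 1) :=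
      Submodule.liftQ _ (X.D (i + 1) ∘ₗ f) (fun x hx => hf x hx)
    obtain ⟨g, hg⟩ := hX (i + 1) (P (i + 1)) (LinearMap.range (d i)) (u ∘ₗ q.symm.toLinearMap)
    have hg' : ∀ x, X.D (i + 1) (f x) = g (d i x) := by
      intro x
      have h1 := hg ⟨d i x, ⟨x, rfl⟩⟩
      have h2 : q.symm ⟨d i x, ⟨x, rfl⟩⟩ = Submodule.Quotient.mk x := by
        rw [LinearEquiv.symm_apply_eq]
        rfl
      rw [LinearMap.comp_apply, LinearEquiv.coe_coe, h2] at h1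
      exact h1.symm
    refine ⟨⟨g, fun x hx => ?_⟩, hg'⟩
    obtain ⟨y, rfl⟩ := (hd i x).1 hx
    rw [← hg', X.DD]
  choose nx hnx using step
  obtain ⟨f0, hf0⟩ := hX 0 (P 0) (LinearMap.ker (d 0)) (X.D 0 ∘ₗ φ)
  let f : ∀ i, {f : P i →ₗ[Rᵐᵒᵖ] X.X (i + 1) // ∀ x, d i x = 0 → X.D (i + 1) (f x) = 0} :=
    fun i => Nat.rec ⟨f0, fun x hx => by
      have := hf0 ⟨x, hx⟩
      rw [this]; exact X.DD 0 _⟩ (fun i f => nx i f) i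
  exact ⟨fun i => (f i).1, hf0, fun i x => hnx i (f i) x⟩

lemma extend_kernel (J : RightMod R) (hJ : StronglyFpInjective R J)
    (P : ℕ → RightMod R) (hP : ∀ i, FpProjective R (P i))
    (d : ∀ i, P i →ₗ[Rᵐᵒᵖ] P (i + 1))
    (hd : ∀ i, Function.Exact (d i) (d (i + 1)))
    (φ : LinearMap.ker (d 0) →ₗ[Rᵐᵒᵖ] J) :
    ∃ ψ : P 0 →ₗ[Rᵐᵒᵖ] J, ∀ x : LinearMap.ker (d 0), ψ x = φ x := by
  obtain ⟨X, e, he, hD0, hX⟩ := exists_target J hJ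
  obtain ⟨f, hf0, hf⟩ := exists_chain X hX P d hd (e ∘ₗ φ)
  obtain ⟨h, hh⟩ := null_fpProj X P hP d f (fun i x => (hd i _).2 ⟨x, rfl⟩) hf
  refine ⟨(LinearEquiv.ofBijective e he).symm.toLinearMap ∘ₗ h 0, fun x => ?_⟩
  have h1 := hh 0 x
  rw [hf0, x.2, map_zero, add_zero] at h1
  have h2 := hD0 h1
  rw [LinearMap.comp_apply, LinearEquiv.coe_coe, LinearEquiv.symm_apply_eq]
  exact h2.symm

lemma exact_of_exactAt (P : CochainComplex (RightMod R) ℤ) (i j k : ℤ) (hij : i + 1 = j)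
    (hjk : j + 1 = k) (h : P.ExactAt j) : Function.Exact (P.d i j).hom (P.d j k).hom := by
  have := (P.exactAt_iff' i j k (by simp [← hij]) (by simp [hjk])).1 h
  exact (ShortComplex.ShortExact.moduleCat_exact_iff_function_exact _).1 this

end Final


/-- In an acyclic complex of fp-projective right `R`-modules, all the
modules of cocycles `Z^n = ker (P^n → P^{n+1})` are weakly fp-projective. -/
theorem cocycles_weaklyFpProjective {R : Type u} [Ring R]
    (P : CochainComplex (RightMod R) ℤ)
    (hacyclic : ∀ n : ℤ, P.ExactAt n)
    (hfpproj : ∀ n : ℤ, FpProjective R (P.X n)) :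
    ∀ n : ℤ, WeaklyFpProjective R (kernel (P.d n (n + 1))) := by
  intro n J hJ
  let Q : ℕ → RightMod R := fun i => P.X (n - 1 + i)
  let d : ∀ i, Q i →ₗ[Rᵐᵒᵖ] Q (i + 1) := fun i => (P.d (n - 1 + i) (n - 1 + (i + 1 : ℕ))).hom
  have hd : ∀ i, Function.Exact (d i) (d (i + 1)) := fun i =>
    exact_of_exactAt P _ _ _ (by push_cast; ring) (by push_cast; ring) (hacyclic _)
  have hQ := extend_kernel J hJ Q (fun i => hfpproj _) d hd
  have hJ1 : FpInjective R J := fun T hT => hJ T hT 1 le_rfl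
  let m : ℤ := n - 1 + (0 : ℕ)
  let m' : ℤ := n - 1 + ((0 + 1 : ℕ) : ℤ)
  have hm' : m' = n := by simp [m']
  have key : ∀ m' : ℤ, n = m' → (∀ φ : LinearMap.ker (P.d m m').hom →ₗ[Rᵐᵒᵖ] J,
      ∃ ψ : P.X m →ₗ[Rᵐᵒᵖ] J, ∀ x : LinearMap.ker (P.d m m').hom, ψ x = φ x) →
      Subsingleton (Abelian.Ext (kernel (P.d n (n + 1))) J 1) := by
    rintro _ rfl H
    let N := LinearMap.ker (P.d m n).hom
    let g : P.X m ⟶ kernel (P.d n (n + 1)) := kernel.lift _ (P.d m n) (P.d_comp_d _ _ _)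
    have hg : ∀ x, (kernel.ι (P.d n (n + 1))).hom (g.hom x) = (P.d m n).hom x := by
      intro x
      exact LinearMap.congr_fun (congrArg ModuleCat.Hom.hom
        (kernel.lift_ι (P.d n (n + 1)) (P.d m n) (P.d_comp_d _ _ _))) x
    have hι : Function.Injective (kernel.ι (P.d n (n + 1))).hom :=
      (ModuleCat.mono_iff_injective _).1 inferInstance
    refine ext_of_extend (M := ModuleCat.of _ N) (N := P.X m) (K := kernel (P.d n (n + 1))) (J := J)
      N.subtype g.hom ?_ N.injective_subtype ?_ (hfpproj m J hJ1) H
    · intro x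
      rw [← hι.eq_iff, hg, map_zero]
      constructor
      · intro h; exact ⟨⟨x, h⟩, rfl⟩
      · rintro ⟨y, rfl⟩; exact y.2
    · intro y
      have hex := exact_of_exactAt P m n (n + 1) (by simp [m]) rfl (hacyclic n)
      have hy : (P.d n (n + 1)).hom ((kernel.ι (P.d n (n + 1))).hom y) = 0 :=
        LinearMap.congr_fun (congrArg ModuleCat.Hom.hom
          (kernel.condition (P.d n (n + 1)))) y
      obtain ⟨x, hx⟩ := (hex _).1 hy
      exact ⟨x, hι ((hg x).trans hx)⟩
  exact key m' hm'.symm hQ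

end Stmt1
end
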